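/- arXiv:1702.02428 — 7 statements merged into one kernel-verified Lean document; each statement's English description precedes it below -/
import Mathlib

section
/- For every s ∈ I and every f ∈ C¹_b(ℝ^d), any classical solution u bounded on strips with datum f has spatial gradient continuous up to the initial time: the map (t,x) ↦ ∇_x u(t,x), defined for t > s, extends to a continuous function on [s,+∞)×ℝ^d whose value at (s,x) is ∇f(x); equivalently, ∇_x u(t,x) → ∇f(x₀) as (t,x) → (s,x₀) with t > s, for every x₀ ∈ ℝ^d. -/
open Set Filter MeasureTheory

noncomputable section

abbrev Euc (d : ℕ) := EuclideanSpace ℝ (Fin d)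

noncomputable def hess (d : ℕ) (g : Euc d → ℝ) (x : Euc d) (i j : Fin d) : ℝ :=
  fderiv ℝ (fun y => fderiv ℝ g y (EuclideanSpace.single j 1)) x (EuclideanSpace.single i 1)

noncomputable def minEig (d : ℕ) (A : Fin d → Fin d → ℝ) : ℝ :=
  sInf {r : ℝ | ∃ ξ : Euc d, ‖ξ‖ = 1 ∧ (∑ i, ∑ j, A i j * ξ i * ξ j) = r}

noncomputable def pdist (d : ℕ) (p q : ℝ × Euc d) : ℝ :=
  Real.sqrt |p.1 - q.1| + ‖p.2 - q.2‖

def LocHolderParab (d : ℕ) (α : ℝ) (I : Set ℝ) (g : ℝ → Euc d → ℝ) : Prop :=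
  ∀ K : Set (ℝ × Euc d), IsCompact K → K ⊆ I ×ˢ (univ : Set (Euc d)) →
    ∃ C > 0, ∀ p ∈ K, ∀ q ∈ K, |g p.1 p.2 - g q.1 q.2| ≤ C * pdist d p q ^ α

noncomputable def Aop (d : ℕ) (Q : ℝ → Euc d → Fin d → Fin d → ℝ)
    (b : ℝ → Euc d → Fin d → ℝ) (c : ℝ → Euc d → ℝ)
    (t : ℝ) (g : Euc d → ℝ) (x : Euc d) : ℝ :=
  (∑ i, ∑ j, Q t x i j * hess d g x i j)
    + (∑ i, b t x i * fderiv ℝ g x (EuclideanSpace.single i 1))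
    + c t x * g x

structure IsClassicalSolution (d : ℕ) (Q : ℝ → Euc d → Fin d → Fin d → ℝ)
    (b : ℝ → Euc d → Fin d → ℝ) (c : ℝ → Euc d → ℝ)
    (s : ℝ) (f : Euc d → ℝ) (u : ℝ → Euc d → ℝ) : Prop where
  cont : ContinuousOn (fun p : ℝ × Euc d => u p.1 p.2) (Ici s ×ˢ univ)
  tdiff : ∀ t, s < t → ∀ x, DifferentiableAt ℝ (fun τ => u τ x) t
  tderiv_cont : ContinuousOn (fun p : ℝ × Euc d => deriv (fun τ => u τ p.2) p.1) (Ioi s ×ˢ univ)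
  xdiff : ∀ t, s < t → ContDiff ℝ 2 (u t)
  grad_cont : ContinuousOn (fun p : ℝ × Euc d => fderiv ℝ (u p.1) p.2) (Ioi s ×ˢ univ)
  hess_cont : ContinuousOn (fun p : ℝ × Euc d => hess d (u p.1) p.2) (Ioi s ×ˢ univ)
  pde : ∀ t, s < t → ∀ x, deriv (fun τ => u τ x) t = Aop d Q b c t (u t) x
  init : ∀ x, u s x = f x

def BoundedOnStrips (d : ℕ) (s : ℝ) (u : ℝ → Euc d → ℝ) : Prop :=
  ∀ T, s < T → ∃ M, ∀ t ∈ Icc s T, ∀ x, |u t x| ≤ M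

def LocBddOn (I : Set ℝ) (g : ℝ → ℝ) : Prop :=
  ∀ a b : ℝ, Icc a b ⊆ I → ∃ M, ∀ t ∈ Icc a b, |g t| ≤ M


def qf {d : ℕ} (A : Fin d → Fin d → ℝ) (ξ : Euc d) : ℝ := ∑ i, ∑ j, A i j * ξ i * ξ j

lemma qf_single {d : ℕ} (A : Fin d → Fin d → ℝ) (i : Fin d) :
    qf A (EuclideanSpace.single i 1) = A i i := by
  unfold qf
  simp [PiLp.single_apply]

lemma touch1d (G G1 : ℝ → ℝ) (g2 a b : ℝ) (h1 : ∀ τ, HasDerivAt G (G1 τ) τ)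
    (h2 : HasDerivAt G1 g2 0) (h : ∀ᶠ τ in nhds (0:ℝ), G τ ≤ G 0 + a * τ + b * τ ^ 2) :
    G1 0 = a ∧ g2 ≤ 2 * b := by
  set F : ℝ → ℝ := fun τ => G τ - a * τ - b * τ ^ 2 with hF
  have hF1 : ∀ τ, HasDerivAt F (G1 τ - a - b * (2 * τ)) τ := by
    intro τ
    have := ((h1 τ).sub ((hasDerivAt_id τ).const_mul a)).sub (((hasDerivAt_id τ).pow 2).const_mul b)
    refine this.congr_deriv ?_
    simp
  have hd : deriv F = fun τ => G1 τ - a - b * (2 * τ) := funext fun τ => (hF1 τ).deriv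
  have hF2 : HasDerivAt (deriv F) (g2 - 2 * b) 0 := by
    rw [hd]
    have := (h2.sub_const a).sub (((hasDerivAt_id (0:ℝ)).const_mul 2).const_mul b)
    refine this.congr_deriv ?_
    simp; ring
  have hmax : IsLocalMax F 0 := by
    filter_upwards [h] with τ hτ
    simp only [hF]; linarith
  have h0 : deriv F 0 = 0 := hmax.deriv_eq_zero
  refine ⟨by rw [hd] at h0; simp at h0; linarith, ?_⟩
  by_contra hcon
  push Not at hcon
  have hmin : IsLocalMin F 0 := isLocalMin_of_deriv_deriv_pos (by rw [hF2.deriv]; linarith) h0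
    (hF1 0).continuousAt
  have hc : F =ᶠ[nhds 0] fun _ => F 0 := by
    filter_upwards [hmax, hmin] with τ h1 h2 using le_antisymm h1 h2
  have hc2 : deriv F =ᶠ[nhds 0] fun _ => 0 := by
    have := hc.deriv
    simpa using this
  have : deriv (deriv F) 0 = 0 := by
    rw [hc2.deriv_eq]; simp
  rw [hF2.deriv] at this
  linarith

lemma euc_sum {d : ℕ} (ξ : Euc d) : ξ = ∑ i, ξ i • (EuclideanSpace.single i (1:ℝ) : Euc d) := by
  ext j
  simp [Pi.single_apply]

lemma line1 {d : ℕ} (g : Euc d → ℝ) (hg : ContDiff ℝ 2 g) (x ξ : Euc d) (τ : ℝ) :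
    HasDerivAt (fun τ : ℝ => g (x + τ • ξ)) (fderiv ℝ g (x + τ • ξ) ξ) τ := by
  have h := (hg.differentiable (by norm_num) (x + τ • ξ)).hasFDerivAt
  have hl : HasDerivAt (fun τ : ℝ => x + τ • ξ) ξ τ := by
    simpa using ((hasDerivAt_id τ).smul_const ξ).const_add x
  exact h.comp_hasDerivAt τ hl

lemma line2 {d : ℕ} (g : Euc d → ℝ) (hg : ContDiff ℝ 2 g) (x ξ : Euc d) :
    HasDerivAt (fun τ : ℝ => fderiv ℝ g (x + τ • ξ) ξ) (qf (hess d g x) ξ) 0 := by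
  have hl : HasDerivAt (fun τ : ℝ => x + τ • ξ) ξ 0 := by
    simpa using ((hasDerivAt_id (0:ℝ)).smul_const ξ).const_add x
  have hg1 : ContDiff ℝ 1 (fderiv ℝ g) := hg.fderiv_right (by norm_num)
  have hj : ∀ j : Fin d, HasDerivAt
      (fun τ : ℝ => ξ j * fderiv ℝ g (x + τ • ξ) (EuclideanSpace.single j 1))
      (ξ j * ∑ i, ξ i * hess d g x i j) 0 := by
    intro j
    have hd : DifferentiableAt ℝ (fun y => fderiv ℝ g y (EuclideanSpace.single j (1:ℝ))) (x + (0:ℝ) • ξ) :=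
      ((hg1.differentiable (by norm_num)) _).clm_apply (differentiableAt_const _)
    have := (hd.hasFDerivAt.comp_hasDerivAt (0:ℝ) hl).const_mul (ξ j)
    refine this.congr_deriv ?_
    congr 1
    conv_lhs => rw [euc_sum ξ]
    simp [hess, map_sum]
  have hs := HasDerivAt.fun_sum (u := Finset.univ) (fun j _ => hj j)
  have e1 : (fun τ : ℝ => fderiv ℝ g (x + τ • ξ) ξ) =
      fun τ : ℝ => ∑ j, ξ j * fderiv ℝ g (x + τ • ξ) (EuclideanSpace.single j 1) := by
    funext τ
    conv_lhs => arg 2; rw [euc_sum ξ]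
    simp [map_sum]
  rw [e1]
  refine hs.congr_deriv ?_
  unfold qf
  rw [Finset.sum_comm]
  refine Finset.sum_congr rfl fun j _ => ?_
  rw [Finset.mul_sum]
  refine Finset.sum_congr rfl fun i _ => ?_
  ring

lemma touch2 {d : ℕ} (g : Euc d → ℝ) (hg : ContDiff ℝ 2 g) (x y ξ η : Euc d) (a b : ℝ)
    (h : ∀ᶠ τ in nhds (0:ℝ), g (x + τ • ξ) - g (y + τ • η) ≤ g x - g y + a * τ + b * τ ^ 2) :
    fderiv ℝ g x ξ - fderiv ℝ g y η = a ∧ qf (hess d g x) ξ - qf (hess d g y) η ≤ 2 * b := by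
  have := touch1d (fun τ => g (x + τ • ξ) - g (y + τ • η))
    (fun τ => fderiv ℝ g (x + τ • ξ) ξ - fderiv ℝ g (y + τ • η) η) _ a b
    (fun τ => (line1 g hg x ξ τ).sub (line1 g hg y η τ))
    ((line2 g hg x ξ).sub (line2 g hg y η)) (by simpa using h)
  simpa using this

lemma trace_le {d : ℕ} (X Y : Fin d → Fin d → ℝ) (hs : ∀ i j, X i j = X j i)
    (hX : ∀ ξ : Euc d, 0 ≤ qf X ξ) (c : ℝ) (hY : ∀ ξ : Euc d, qf Y ξ ≤ c * ‖ξ‖ ^ 2) :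
    ∑ i, ∑ j, X i j * Y i j ≤ c * ∑ i, X i i := by
  have hp : (Matrix.of X).PosSemidef := by
    refine Matrix.PosSemidef.of_dotProduct_mulVec_nonneg ?_ ?_
    · ext i j; simp [hs i j]
    · intro v
      have := hX (WithLp.toLp 2 v)
      refine this.trans_eq ?_
      simp only [qf, dotProduct, Matrix.mulVec, Finset.mul_sum]
      refine Finset.sum_congr rfl fun i _ => Finset.sum_congr rfl fun j _ => ?_
      simp; ring
  obtain ⟨n, B, hB⟩ := Matrix.posSemidef_iff_eq_sum_vecMulVec.mp hp
  have hXB : ∀ i j, X i j = ∑ k, B k i * B k j := by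
    intro i j
    have := congrFun (congrFun hB i) j
    simpa [Matrix.sum_apply, Matrix.vecMulVec_apply] using this
  have e1 : ∑ i, ∑ j, X i j * Y i j = ∑ k, qf Y (WithLp.toLp 2 (B k)) := by
    simp only [hXB, qf, Finset.sum_mul]
    rw [Finset.sum_comm]
    rw [Finset.sum_comm]
    conv_lhs => arg 2; ext i; rw [Finset.sum_comm]
    rw [Finset.sum_comm]
    refine Finset.sum_congr rfl fun k _ => Finset.sum_congr rfl fun i _ =>
      Finset.sum_congr rfl fun j _ => ?_
    ring
  have e2 : ∑ i, X i i = ∑ k, ‖(WithLp.toLp 2 (B k) : Euc d)‖ ^ 2 := by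
    simp only [hXB, EuclideanSpace.norm_sq_eq]
    rw [Finset.sum_comm]
    refine Finset.sum_congr rfl fun k _ => Finset.sum_congr rfl fun i _ => ?_
    simp [sq]
  rw [e1, e2, Finset.mul_sum]
  exact Finset.sum_le_sum fun k _ => hY _

lemma matrix_step {d : ℕ} (Qx Qy A B : Fin d → Fin d → ℝ)
    (hsx : ∀ i j, Qx i j = Qx j i) (hsy : ∀ i j, Qy i j = Qy j i)
    (κ ν a b m θ : ℝ) (e : Euc d) (he : ‖e‖ = 1) (hκ : 0 ≤ κ) (hν : 0 ≤ ν) (hb : 0 ≤ b)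
    (hm : 0 ≤ m)
    (hell : ∀ ξ : Euc d, (κ + ν) * ‖ξ‖ ^ 2 ≤ qf Qx ξ)
    (hlip : ∀ ξ : Euc d, |qf Qy ξ - qf Qx ξ| ≤ κ * ‖ξ‖ ^ 2)
    (hA : ∀ ξ : Euc d, qf A ξ ≤ a * ‖ξ‖ ^ 2) (hB : ∀ ξ : Euc d, - qf B ξ ≤ b * ‖ξ‖ ^ 2)
    (hAB : ∀ ξ : Euc d, qf A ξ - qf B ξ ≤ m * ‖ξ‖ ^ 2)
    (hAe : qf A e - qf B e ≤ θ) :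
    (∑ i, ∑ j, Qx i j * A i j) - (∑ i, ∑ j, Qy i j * B i j) ≤
      m * (∑ i, Qx i i) + ν * θ + a * (κ * d) + b * (2 * κ * d) := by
  have hone : ∀ ξ : Euc d, ∑ i, ∑ j, (if i = j then (1:ℝ) else 0) * ξ i * ξ j = ‖ξ‖ ^ 2 := by
    intro ξ
    rw [EuclideanSpace.norm_sq_eq]
    simp [sq]
  have hee : ∀ ξ : Euc d, ∑ i, ∑ j, (e i * e j) * ξ i * ξ j = (inner ℝ e ξ) ^ 2 := by
    intro ξ
    rw [sq, PiLp.inner_apply, Finset.sum_mul_sum]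
    refine Finset.sum_congr rfl fun i _ => Finset.sum_congr rfl fun j _ => ?_
    simp; ring
  have hsub : ∀ (X Y : Fin d → Fin d → ℝ) (ξ : Euc d),
      qf (fun i j => X i j - Y i j) ξ = qf X ξ - qf Y ξ := by
    intro X Y ξ
    simp only [qf, sub_mul, Finset.sum_sub_distrib]
  have hmulq : ∀ (r : ℝ) (Y : Fin d → Fin d → ℝ) (ξ : Euc d),
      qf (fun i j => r * Y i j) ξ = r * qf Y ξ := by
    intro r Y ξ
    simp only [qf, Finset.mul_sum]
    refine Finset.sum_congr rfl fun i _ => Finset.sum_congr rfl fun j _ => ?_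
    ring
  set δ : Fin d → Fin d → ℝ := fun i j => if i = j then (1:ℝ) else 0 with hδ
  set E : Fin d → Fin d → ℝ := fun i j => e i * e j with hE
  have qδ : ∀ ξ : Euc d, qf δ ξ = ‖ξ‖ ^ 2 := hone
  have qE : ∀ ξ : Euc d, qf E ξ = (inner ℝ e ξ) ^ 2 := hee
  have qEle : ∀ ξ : Euc d, (inner ℝ e ξ : ℝ) ^ 2 ≤ ‖ξ‖ ^ 2 := by
    intro ξ
    have := abs_real_inner_le_norm e ξ
    rw [he, one_mul] at this
    exact sq_le_sq' (by linarith [neg_abs_le (inner ℝ e ξ : ℝ)]) ((le_abs_self _).trans this)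
  -- piece 1
  have t1 := trace_le (fun i j => (Qx i j - κ * δ i j) - ν * E i j) (fun i j => A i j - B i j)
    (by intro i j; simp only [hsx i j, hδ, hE, eq_comm (a := i), mul_comm (e i)])
    (by
      intro ξ
      rw [hsub (fun i j => Qx i j - κ * δ i j) (fun i j => ν * E i j), hsub Qx (fun i j => κ * δ i j),
        hmulq, hmulq, qδ, qE]
      nlinarith [hell ξ, mul_le_mul_of_nonneg_left (qEle ξ) hν])
    m (by intro ξ; rw [hsub]; exact hAB ξ)
  have t2 := trace_le δ A (by intro i j; simp only [hδ, eq_comm]) (by intro ξ; rw [qδ]; positivity)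
    a hA
  have t3 := trace_le (fun i j => (Qy i j - Qx i j) - (-κ) * δ i j) (fun i j => (-1) * B i j)
    (by intro i j; simp only [hsx i j, hsy i j, hδ, eq_comm (a := i)])
    (by
      intro ξ
      rw [hsub (fun i j => Qy i j - Qx i j) (fun i j => (-κ) * δ i j), hsub Qy Qx, hmulq, qδ]
      have := neg_abs_le (qf Qy ξ - qf Qx ξ)
      linarith [hlip ξ])
    b (by intro ξ; rw [hmulq]; linarith [hB ξ])
  have trδ : ∑ i, δ i i = d := by simp [hδ]
  have trE : ∑ i, E i i = 1 := by
    have := EuclideanSpace.norm_sq_eq e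
    rw [he] at this
    simp only [hE]
    rw [one_pow] at this
    rw [this]
    exact Finset.sum_congr rfl fun i _ => by simp [sq]
  have tr3 : ∑ i, (Qy i i - Qx i i) ≤ κ * d := by
    calc ∑ i, (Qy i i - Qx i i) ≤ ∑ i : Fin d, κ := by
          refine Finset.sum_le_sum fun i _ => ?_
          have := (le_abs_self _).trans (hlip (EuclideanSpace.single i 1))
          rw [qf_single, qf_single] at this
          simpa using this
      _ = κ * d := by simp [mul_comm]
  have expand : (∑ i, ∑ j, Qx i j * A i j) - (∑ i, ∑ j, Qy i j * B i j) =
      (∑ i, ∑ j, ((Qx i j - κ * δ i j) - ν * E i j) * (A i j - B i j))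
      + ν * (qf A e - qf B e) + κ * (∑ i, ∑ j, δ i j * A i j)
      + (∑ i, ∑ j, ((Qy i j - Qx i j) - (-κ) * δ i j) * ((-1) * B i j)) := by
    simp only [qf, Finset.mul_sum, ← Finset.sum_sub_distrib, ← Finset.sum_add_distrib]
    refine Finset.sum_congr rfl fun i _ => Finset.sum_congr rfl fun j _ => ?_
    simp only [hE]; ring
  simp only [Finset.sum_sub_distrib, ← Finset.mul_sum, trδ, trE] at t1 t3 tr3
  rw [trδ] at t2
  rw [expand]
  have q1 : m * (∑ i, Qx i i - κ * d - ν * 1) ≤ m * ∑ i, Qx i i := by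
    apply mul_le_mul_of_nonneg_left _ hm
    have : 0 ≤ κ * d := by positivity
    linarith
  have q3 : b * (∑ i, Qy i i - ∑ i, Qx i i - -κ * d) ≤ b * (2 * κ * d) :=
    mul_le_mul_of_nonneg_left (by linarith) hb
  have q2 := mul_le_mul_of_nonneg_left t2 hκ
  have q4 := mul_le_mul_of_nonneg_left hAe hν
  linarith

lemma omega_le {d : ℕ} (w ζ : Euc d) (r τ : ℝ) (hr : 0 < r) (hw : 0 < ‖w‖) :
    ‖w + τ • ζ‖ - ‖w + τ • ζ‖ ^ 2 / (4 * r) ≤ ‖w‖ - ‖w‖ ^ 2 / (4 * r)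
      + (1 - ‖w‖ / (2 * r)) * ((2 * τ * inner ℝ w ζ + τ ^ 2 * ‖ζ‖ ^ 2) / (2 * ‖w‖)) := by
  have h : ‖w + τ • ζ‖ ^ 2 = ‖w‖ ^ 2 + (2 * τ * inner ℝ w ζ + τ ^ 2 * ‖ζ‖ ^ 2) := by
    rw [norm_add_sq_real, norm_smul, inner_smul_right, mul_pow, Real.norm_eq_abs, sq_abs]; ring
  have h2 : 2 * τ * inner ℝ w ζ + τ ^ 2 * ‖ζ‖ ^ 2 = ‖w + τ • ζ‖ ^ 2 - ‖w‖ ^ 2 := by linarith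
  rw [h2]
  generalize ‖w + τ • ζ‖ = N
  generalize ‖w‖ = ρ at *
  have : ρ - ρ ^ 2 / (4 * r) + (1 - ρ / (2 * r)) * ((N ^ 2 - ρ ^ 2) / (2 * ρ))
      - (N - N ^ 2 / (4 * r)) = (N - ρ) ^ 2 / (2 * ρ) := by
    field_simp; ring
  have h3 : 0 ≤ (N - ρ) ^ 2 / (2 * ρ) := by positivity
  linarith

set_option maxHeartbeats 1000000 in
lemma max_point {d : ℕ} (g : Euc d → ℝ) (hg : ContDiff ℝ 2 g) (x y z : Euc d)
    (p : Euc d →L[ℝ] ℝ) (r k m : ℝ) (hr : 0 < r) (hk : 0 < k) (hm : 0 < m)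
    (hxy : 0 < ‖x - y‖) (hxyr : ‖x - y‖ < r) (hxz : ‖x - z‖ < r)
    (hmax : ∀ x' y' : Euc d, ‖x' - z‖ ≤ r → ‖x' - y'‖ ≤ r →
      g x' - g y' - p (x' - y') - k * (‖x' - y'‖ - ‖x' - y'‖ ^ 2 / (4 * r)) - m * ‖x' - z‖ ^ 2 ≤
      g x - g y - p (x - y) - k * (‖x - y‖ - ‖x - y‖ ^ 2 / (4 * r)) - m * ‖x - z‖ ^ 2) :
    (∀ ξ : Euc d, |fderiv ℝ g x ξ| ≤ (‖p‖ + k + 2 * m * r) * ‖ξ‖) ∧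
    (∀ ξ : Euc d, |fderiv ℝ g y ξ| ≤ (‖p‖ + k) * ‖ξ‖) ∧
    (∀ ξ : Euc d, qf (hess d g x) ξ ≤ (k / ‖x - y‖ + 2 * m) * ‖ξ‖ ^ 2) ∧
    (∀ ξ : Euc d, - qf (hess d g y) ξ ≤ (k / ‖x - y‖) * ‖ξ‖ ^ 2) ∧
    (∀ ξ : Euc d, qf (hess d g x) ξ - qf (hess d g y) ξ ≤ (2 * m) * ‖ξ‖ ^ 2) ∧
    qf (hess d g x) (‖x - y‖⁻¹ • (x - y)) - qf (hess d g y) (‖x - y‖⁻¹ • (x - y))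
      ≤ -(2 * k / r) + 2 * m := by
  have hev : ∀ ξ η : Euc d, ∀ᶠ τ in nhds (0:ℝ), g (x + τ • ξ) - g (y + τ • η) ≤ g x - g y
      + p (ξ - η) * τ + k * ((‖(x - y) + τ • (ξ - η)‖ - ‖(x - y) + τ • (ξ - η)‖ ^ 2 / (4 * r))
        - (‖x - y‖ - ‖x - y‖ ^ 2 / (4 * r)))
      + m * (2 * τ * inner ℝ (x - z) ξ + τ ^ 2 * ‖ξ‖ ^ 2) := by
    intro ξ η
    have c1 : Continuous fun τ : ℝ => ‖x + τ • ξ - z‖ := by fun_prop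
    have c2 : Continuous fun τ : ℝ => ‖x + τ • ξ - (y + τ • η)‖ := by fun_prop
    have e1 : ∀ᶠ τ in nhds (0:ℝ), ‖x + τ • ξ - z‖ < r :=
      (c1.tendsto 0).eventually (gt_mem_nhds (by simpa using hxz))
    have e2 : ∀ᶠ τ in nhds (0:ℝ), ‖x + τ • ξ - (y + τ • η)‖ < r :=
      (c2.tendsto 0).eventually (gt_mem_nhds (by simpa using hxyr))
    filter_upwards [e1, e2] with τ h1 h2
    have := hmax _ _ h1.le h2.le
    have a1 : x + τ • ξ - (y + τ • η) = (x - y) + τ • (ξ - η) := by rw [smul_sub]; abel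
    have a2 : x + τ • ξ - z = (x - z) + τ • ξ := by abel
    have a3 : ‖(x - z) + τ • ξ‖ ^ 2 = ‖x - z‖ ^ 2 + (2 * τ * inner ℝ (x - z) ξ + τ ^ 2 * ‖ξ‖ ^ 2) := by
      rw [norm_add_sq_real, norm_smul, inner_smul_right, mul_pow, Real.norm_eq_abs, sq_abs]; ring
    rw [a1, a2, a3, map_add, map_smul, smul_eq_mul] at this
    linarith
  set w := x - y with hw
  set ρ := ‖w‖ with hρ
  set ω' := 1 - ρ / (2 * r) with hω'
  have hq : 0 < ρ / (2 * r) := by positivity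
  have hq1 : ρ / (2 * r) < 1 := by rw [div_lt_one (by positivity)]; linarith
  have hω0 : 0 ≤ ω' := by linarith
  have hω1 : ω' ≤ 1 := by linarith
  have hX : ∀ ξ : Euc d, fderiv ℝ g x ξ = p ξ + k * ω' * (inner ℝ w ξ / ρ) + 2 * m * inner ℝ (x - z) ξ ∧
      qf (hess d g x) ξ ≤ 2 * ((k * ω' / (2 * ρ) + m) * ‖ξ‖ ^ 2) := by
    intro ξ
    have := touch2 g hg x y ξ 0 (p ξ + k * ω' * (inner ℝ w ξ / ρ) + 2 * m * inner ℝ (x - z) ξ)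
      ((k * ω' / (2 * ρ) + m) * ‖ξ‖ ^ 2) (by
        filter_upwards [hev ξ 0] with τ h
        rw [sub_zero] at h
        have h2 := mul_le_mul_of_nonneg_left (omega_le w ξ r τ hr hxy) hk.le
        refine h.trans ?_
        have e : k * (ω' * ((2 * τ * inner ℝ w ξ + τ ^ 2 * ‖ξ‖ ^ 2) / (2 * ρ))) =
          k * ω' * (inner ℝ w ξ / ρ) * τ + k * ω' / (2 * ρ) * ‖ξ‖ ^ 2 * τ ^ 2 := by
          field_simp
        rw [mul_add, e] at h2
        linarith)
    have z0 : ∀ A : Fin d → Fin d → ℝ, qf A (0 : Euc d) = 0 := by intro A; simp [qf]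
    simpa [z0] using this
  have hY : ∀ ξ : Euc d, fderiv ℝ g y ξ = p ξ + k * ω' * (inner ℝ w ξ / ρ) ∧
      -qf (hess d g y) ξ ≤ 2 * ((k * ω' / (2 * ρ)) * ‖ξ‖ ^ 2) := by
    intro ξ
    have := touch2 g hg x y 0 ξ (-(p ξ + k * ω' * (inner ℝ w ξ / ρ)))
      ((k * ω' / (2 * ρ)) * ‖ξ‖ ^ 2) (by
        filter_upwards [hev 0 ξ] with τ h
        rw [zero_sub] at h
        have h2 := mul_le_mul_of_nonneg_left (omega_le w (-ξ) r τ hr hxy) hk.le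
        refine h.trans ?_
        rw [norm_neg, inner_neg_right] at h2
        have e : k * (ω' * ((2 * τ * -inner ℝ w ξ + τ ^ 2 * ‖ξ‖ ^ 2) / (2 * ρ))) =
          -(k * ω' * (inner ℝ w ξ / ρ) * τ) + k * ω' / (2 * ρ) * ‖ξ‖ ^ 2 * τ ^ 2 := by
          field_simp
        rw [mul_add, e] at h2
        rw [map_neg, inner_zero_right, norm_zero]
        linarith)
    have z0 : ∀ A : Fin d → Fin d → ℝ, qf A (0 : Euc d) = 0 := by intro A; simp [qf]
    simp only [z0, map_zero, zero_sub] at this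
    exact ⟨by linarith [this.1], this.2⟩
  have hpb : ∀ ξ : Euc d, |p ξ| ≤ ‖p‖ * ‖ξ‖ := fun ξ => p.le_opNorm ξ
  have hkb : ∀ ξ : Euc d, |k * ω' * (inner ℝ w ξ / ρ)| ≤ k * ‖ξ‖ := by
    intro ξ
    have h1 : |inner ℝ w ξ / ρ| ≤ ‖ξ‖ := by
      rw [abs_div, abs_of_pos hxy, div_le_iff₀ hxy, mul_comm]
      exact abs_real_inner_le_norm w ξ
    rw [abs_mul, abs_of_nonneg (by positivity : 0 ≤ k * ω')]
    calc k * ω' * |inner ℝ w ξ / ρ| ≤ k * 1 * ‖ξ‖ := by gcongr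
      _ = _ := by ring
  have hmb : ∀ ξ : Euc d, |2 * m * inner ℝ (x - z) ξ| ≤ 2 * m * r * ‖ξ‖ := by
    intro ξ
    rw [abs_mul, abs_of_pos (by positivity : 0 < 2 * m)]
    have := abs_real_inner_le_norm (x - z) ξ
    calc 2 * m * |inner ℝ (x - z) ξ| ≤ 2 * m * (r * ‖ξ‖) := by
          gcongr
          exact this.trans (by gcongr)
      _ = _ := by ring
  have hsl : k * ω' / (2 * ρ) ≤ k / ρ / 2 := by
    rw [div_div, mul_comm ρ 2]
    gcongr
    nlinarith
  refine ⟨?_, ?_, ?_, ?_, ?_, ?_⟩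
  · intro ξ
    rw [(hX ξ).1]
    refine (abs_add_three _ _ _).trans ?_
    linarith [hpb ξ, hkb ξ, hmb ξ]
  · intro ξ
    rw [(hY ξ).1]
    refine (abs_add_le _ _).trans ?_
    linarith [hpb ξ, hkb ξ]
  · intro ξ
    have := mul_le_mul_of_nonneg_right hsl (sq_nonneg ‖ξ‖)
    linarith [(hX ξ).2]
  · intro ξ
    have := mul_le_mul_of_nonneg_right hsl (sq_nonneg ‖ξ‖)
    linarith [(hY ξ).2]
  · intro ξ
    have := (touch2 g hg x y ξ ξ (2 * m * inner ℝ (x - z) ξ) (m * ‖ξ‖ ^ 2) (by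
      filter_upwards [hev ξ ξ] with τ h
      simp only [sub_self, smul_zero, add_zero, map_zero] at h
      linarith)).2
    linarith
  · set e := ρ⁻¹ • w with he
    have hne : ‖e‖ = 1 := by
      rw [he, norm_smul, norm_inv, norm_norm, inv_mul_cancel₀ hxy.ne']
    have hwe : w = ρ • e := by rw [he, smul_smul, mul_inv_cancel₀ hxy.ne', one_smul]
    have := (touch2 g hg x y e (-e) (2 * p e + 2 * k * ω' + 2 * m * inner ℝ (x - z) e)
      (-(k / r) + m) (by
      have hpos : ∀ᶠ τ in nhds (0:ℝ), 0 < ρ + 2 * τ := by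
        have c : Continuous fun τ : ℝ => ρ + 2 * τ := by fun_prop
        exact (c.tendsto 0).eventually (lt_mem_nhds (by simpa using hxy))
      filter_upwards [hev e (-e), hpos] with τ h hτ
      have e1 : w + τ • (e - -e) = (ρ + 2 * τ) • e := by
        have : e - -e = (2:ℝ) • e := by rw [two_smul]; abel
        rw [this, smul_smul, mul_comm τ 2, add_smul, ← hwe]
      have e2 : ‖w + τ • (e - -e)‖ = ρ + 2 * τ := by
        rw [e1, norm_smul, hne, mul_one, Real.norm_eq_abs, abs_of_pos hτ]
      rw [e2, hne, sub_neg_eq_add, map_add] at h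
      have e3 : k * ((ρ + 2 * τ - (ρ + 2 * τ) ^ 2 / (4 * r)) - (ρ - ρ ^ 2 / (4 * r))) =
          2 * k * ω' * τ - k / r * τ ^ 2 := by
        rw [hω']; field_simp; ring
      rw [e3] at h
      linarith)).2
    have hneg : ∀ A : Fin d → Fin d → ℝ, qf A (-e) = qf A e := by
      intro A; simp [qf]
    rw [hneg] at this
    have e4 : 2 * k / r = 2 * (k / r) := by ring
    rw [e4]; linarith

set_option maxHeartbeats 1000000 in
lemma doubling {d : ℕ} (Q : ℝ → Euc d → Fin d → Fin d → ℝ)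
    (b : ℝ → Euc d → Fin d → ℝ) (c : ℝ → Euc d → ℝ) (s : ℝ) (f : Euc d → ℝ) (u : ℝ → Euc d → ℝ)
    (hu : IsClassicalSolution d Q b c s f u) (z : Euc d) (p : Euc d →L[ℝ] ℝ)
    (T r ν₀ Λ Bb CU L₁ ε k : ℝ) (hr : 0 < r) (hν₀ : 0 < ν₀) (hε : 0 < ε) (hL₁ : 0 ≤ L₁)
    (hsymm : ∀ t ∈ Icc s T, ∀ x : Euc d, ∀ i j, Q t x i j = Q t x j i)
    (hell : ∀ t ∈ Icc s T, ∀ x : Euc d, ∀ ξ : Euc d, ν₀ * ‖ξ‖ ^ 2 ≤ qf (Q t x) ξ)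
    (htr : ∀ t ∈ Icc s T, ∀ x : Euc d, ‖x - z‖ ≤ 2 * r → ∑ i, Q t x i i ≤ Λ)
    (hLip : ∀ t ∈ Icc s T, ∀ x y : Euc d, ‖x - z‖ ≤ 2 * r → ‖y - z‖ ≤ 2 * r → ∀ ξ : Euc d,
      |qf (Q t y) ξ - qf (Q t x) ξ| ≤ L₁ * ‖x - y‖ * ‖ξ‖ ^ 2)
    (hb : ∀ t ∈ Icc s T, ∀ x : Euc d, ‖x - z‖ ≤ 2 * r → ∑ i, |b t x i| ≤ Bb)
    (hc : ∀ t ∈ Icc s T, ∀ x : Euc d, ‖x - z‖ ≤ 2 * r → |c t x * u t x| ≤ CU)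
    (hinit : ∀ x y : Euc d, ‖x - z‖ ≤ 2 * r → ‖y - z‖ ≤ 2 * r →
      f x - f y - p (x - y) ≤ ε * ‖x - y‖)
    (hosc : ∀ t ∈ Icc s T, ∀ x y : Euc d, ‖x - z‖ ≤ r → ‖x - y‖ ≤ r →
      u t x - u t y - p (x - y) ≤ 2 * ε * r)
    (hL₁r : L₁ * r ≤ ν₀ / 2) (hk : 3 * ε ≤ k)
    (hneg : 4 * ε * Λ / r - ν₀ * k / r + 2 * ε * ν₀ / r + 3 * L₁ * d * k + 4 * ε * L₁ * d
      + Bb * (2 * ‖p‖ + 2 * k + 4 * ε) + 2 * CU < 0) :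
    ∀ t ∈ Icc s T, ∀ y : Euc d, ‖z - y‖ ≤ r → u t z - u t y - p (z - y) ≤ k * ‖z - y‖ := by
  intro t₁ ht₁ y₁ hy₁
  have hkpos : 0 < k := by linarith
  set m : ℝ := 2 * ε / r with hm
  have hmpos : 0 < m := by positivity
  have hmr : m * r = 2 * ε := by rw [hm]; field_simp
  set Φ : ℝ × Euc d × Euc d → ℝ := fun q => u q.1 q.2.1 - u q.1 q.2.2 - p (q.2.1 - q.2.2)
    - k * (‖q.2.1 - q.2.2‖ - ‖q.2.1 - q.2.2‖ ^ 2 / (4 * r)) - m * ‖q.2.1 - z‖ ^ 2 with hΦ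
  set S : Set (ℝ × Euc d × Euc d) :=
    (Icc s T ×ˢ (Metric.closedBall z (2 * r) ×ˢ Metric.closedBall z (2 * r))) ∩
      {q | ‖q.2.1 - z‖ ≤ r ∧ ‖q.2.1 - q.2.2‖ ≤ r} with hS
  have hScomp : IsCompact S := by
    refine (isCompact_Icc.prod ((isCompact_closedBall z (2 * r)).prod
      (isCompact_closedBall z (2 * r)))).inter_right ?_
    have k1 : IsClosed {q : ℝ × Euc d × Euc d | ‖q.2.1 - z‖ ≤ r} :=
      isClosed_le (by fun_prop) (by fun_prop)
    have k2 : IsClosed {q : ℝ × Euc d × Euc d | ‖q.2.1 - q.2.2‖ ≤ r} :=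
      isClosed_le (by fun_prop) (by fun_prop)
    exact k1.inter k2
  have memS : ∀ (t : ℝ) (x y : Euc d), t ∈ Icc s T → ‖x - z‖ ≤ r → ‖x - y‖ ≤ r → (t, x, y) ∈ S := by
    intro t x y ht hx hxy
    refine ⟨⟨ht, ?_, ?_⟩, hx, hxy⟩
    · rw [mem_closedBall_iff_norm]; show ‖x - z‖ ≤ _; linarith
    · rw [mem_closedBall_iff_norm]; show ‖y - z‖ ≤ _
      have := norm_sub_le_norm_sub_add_norm_sub y x z
      rw [norm_sub_rev y x] at this
      linarith
  have hcont : ContinuousOn Φ S := by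
    have h1 : ContinuousOn (fun q : ℝ × Euc d × Euc d => u q.1 q.2.1) S :=
      hu.cont.comp (f := fun q : ℝ × Euc d × Euc d => (q.1, q.2.1)) (by fun_prop)
        (fun q hq => ⟨hq.1.1.1, mem_univ _⟩)
    have h2 : ContinuousOn (fun q : ℝ × Euc d × Euc d => u q.1 q.2.2) S :=
      hu.cont.comp (f := fun q : ℝ × Euc d × Euc d => (q.1, q.2.2)) (by fun_prop)
        (fun q hq => ⟨hq.1.1.1, mem_univ _⟩)
    have h3 : Continuous (fun q : ℝ × Euc d × Euc d => p (q.2.1 - q.2.2)) := by fun_prop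
    have h4 : Continuous (fun q : ℝ × Euc d × Euc d =>
      k * (‖q.2.1 - q.2.2‖ - ‖q.2.1 - q.2.2‖ ^ 2 / (4 * r))) := by fun_prop
    have h5 : Continuous (fun q : ℝ × Euc d × Euc d => m * ‖q.2.1 - z‖ ^ 2) := by fun_prop
    exact (((h1.sub h2).sub h3.continuousOn).sub h4.continuousOn).sub h5.continuousOn
  obtain ⟨⟨t, x, y⟩, hmem, hmaxS⟩ := hScomp.exists_isMaxOn
    ⟨_, memS t₁ z y₁ ht₁ (by simpa using hr.le) hy₁⟩ hcont
  have hmax : ∀ (t' : ℝ) (x' y' : Euc d), t' ∈ Icc s T → ‖x' - z‖ ≤ r → ‖x' - y'‖ ≤ r →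
      Φ (t', x', y') ≤ Φ (t, x, y) := fun t' x' y' h1 h2 h3 => hmaxS (memS t' x' y' h1 h2 h3)
  have ht : t ∈ Icc s T := hmem.1.1
  have hx2 : ‖x - z‖ ≤ 2 * r := by
    have := hmem.1.2.1
    rw [mem_closedBall_iff_norm] at this; exact this
  have hy2 : ‖y - z‖ ≤ 2 * r := by
    have := hmem.1.2.2
    rw [mem_closedBall_iff_norm] at this; exact this
  have hxz : ‖x - z‖ ≤ r := hmem.2.1
  have hxy : ‖x - y‖ ≤ r := hmem.2.2
  -- the positive part of the barrier
  have hω : 3 / 4 * ‖x - y‖ ≤ ‖x - y‖ - ‖x - y‖ ^ 2 / (4 * r) := by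
    have h0 := norm_nonneg (x - y)
    have : ‖x - y‖ ^ 2 / (4 * r) ≤ ‖x - y‖ / 4 := by
      rw [div_le_div_iff₀ (by positivity) (by norm_num)]; nlinarith
    linarith
  have hkω := mul_le_mul_of_nonneg_left hω hkpos.le
  suffices hle : Φ (t, x, y) ≤ 0 by
    have h1 := hmax t₁ z y₁ ht₁ (by simpa using hr.le) hy₁
    simp only [hΦ, sub_self, norm_zero] at h1 hle
    have h2 : 0 ≤ k * (‖z - y₁‖ ^ 2 / (4 * r)) := by positivity
    nlinarith
  by_contra hpos
  push Not at hpos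
  have hΦe : Φ (t, x, y) = u t x - u t y - p (x - y)
    - k * (‖x - y‖ - ‖x - y‖ ^ 2 / (4 * r)) - m * ‖x - z‖ ^ 2 := rfl
  have hmz : 0 ≤ m * ‖x - z‖ ^ 2 := by positivity
  have hne : 0 < ‖x - y‖ := by
    rcases (norm_nonneg (x - y)).lt_or_eq with h | h
    · exact h
    · exfalso
      have : x = y := by rw [← sub_eq_zero]; exact norm_eq_zero.mp h.symm
      rw [hΦe, this] at hpos
      simp at hpos
      rw [this] at hmz
      linarith
  have hxyr : ‖x - y‖ < r := by
    refine lt_of_le_of_ne hxy fun h => ?_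
    have := hosc t ht x y hxz hxy
    rw [hΦe] at hpos
    rw [h] at hkω hpos
    nlinarith
  have hxzr : ‖x - z‖ < r := by
    refine lt_of_le_of_ne hxz fun h => ?_
    have := hosc t ht x y hxz hxy
    rw [hΦe, h] at hpos
    have h3 : m * r ^ 2 = 2 * ε * r := by rw [sq, ← mul_assoc, hmr]
    have : 0 ≤ k * (3 / 4 * ‖x - y‖) := by positivity
    linarith
  have hts : s < t := by
    refine lt_of_le_of_ne ht.1 fun h => ?_
    have := hinit x y hx2 hy2
    rw [hΦe, ← h, hu.init, hu.init] at hpos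
    nlinarith
  obtain ⟨g1, g2, q1, q2, q3, q4⟩ := max_point (u t) (hu.xdiff t hts) x y z p r k m hr hkpos hmpos
    hne hxyr hxzr (fun x' y' h1 h2 => hmax t x' y' ht h1 h2)
  -- time derivative
  have htime : 0 ≤ deriv (fun τ => u τ x) t - deriv (fun τ => u τ y) t := by
    have hd : HasDerivAt (fun τ => u τ x - u τ y)
      (deriv (fun τ => u τ x) t - deriv (fun τ => u τ y) t) t :=
      ((hu.tdiff t hts x).hasDerivAt).sub ((hu.tdiff t hts y).hasDerivAt)
    have hl := hd.hasDerivWithinAt (s := Iio t)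
    rw [hasDerivWithinAt_iff_tendsto_slope' (by simp)] at hl
    refine ge_of_tendsto hl ?_
    filter_upwards [Ioo_mem_nhdsLT hts] with τ hτ
    have := hmax τ x y ⟨hτ.1.le, hτ.2.le.trans ht.2⟩ hxz hxy
    simp only [hΦ] at this
    rw [slope_def_field]
    exact div_nonneg_of_nonpos (by linarith) (by linarith [hτ.2])
  have hms := matrix_step (Q t x) (Q t y) (hess d (u t) x) (hess d (u t) y) (hsymm t ht x)
    (hsymm t ht y) (L₁ * ‖x - y‖) (ν₀ / 2) (k / ‖x - y‖ + 2 * m) (k / ‖x - y‖) (2 * m)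
    (-(2 * k / r) + 2 * m) (‖x - y‖⁻¹ • (x - y))
    (by rw [norm_smul, norm_inv, norm_norm, inv_mul_cancel₀ hne.ne']) (by positivity) (by positivity)
    (by positivity) (by positivity)
    (by
      intro ξ
      refine le_trans ?_ (hell t ht x ξ)
      apply mul_le_mul_of_nonneg_right _ (sq_nonneg _)
      have := mul_le_mul_of_nonneg_left hxy hL₁
      linarith)
    (hLip t ht x y hx2 hy2) q1 q2 q3 q4
  have hbterm : ∀ (w : Euc d) (ℓ : Euc d →L[ℝ] ℝ) (N : ℝ), ‖w - z‖ ≤ 2 * r → 0 ≤ N →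
      (∀ ξ : Euc d, |ℓ ξ| ≤ N * ‖ξ‖) →
      |∑ i, b t w i * ℓ (EuclideanSpace.single i 1)| ≤ Bb * N := by
    intro w ℓ N hw hN hℓ
    refine (Finset.abs_sum_le_sum_abs _ _).trans ?_
    refine le_trans ?_ (mul_le_mul_of_nonneg_right (hb t ht w hw) hN)
    rw [Finset.sum_mul]
    refine Finset.sum_le_sum fun i _ => ?_
    rw [abs_mul]
    refine mul_le_mul_of_nonneg_left ?_ (abs_nonneg _)
    simpa using hℓ (EuclideanSpace.single i 1)
  have b1 := hbterm x _ _ hx2 (by positivity) g1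
  have b2 := hbterm y _ _ hy2 (by positivity) g2
  have c1 := hc t ht x hx2
  have c2 := hc t ht y hy2
  rw [hu.pde t hts x, hu.pde t hts y] at htime
  unfold Aop at htime
  have e1 : (k / ‖x - y‖ + 2 * m) * (L₁ * ‖x - y‖ * d) = L₁ * d * k + 2 * m * L₁ * ‖x - y‖ * d := by
    field_simp
  have e2 : k / ‖x - y‖ * (2 * (L₁ * ‖x - y‖) * d) = 2 * L₁ * d * k := by
    field_simp
  have e3 : 2 * m * L₁ * ‖x - y‖ * d ≤ 4 * ε * L₁ * d := by
    calc 2 * m * L₁ * ‖x - y‖ * d ≤ 2 * m * L₁ * r * d := by gcongr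
      _ = 4 * ε * L₁ * d := by linear_combination 2 * L₁ * d * hmr
  have e4 : 2 * m * ∑ i, Q t x i i ≤ 4 * ε * Λ / r := by
    calc 2 * m * ∑ i, Q t x i i ≤ 2 * m * Λ := by gcongr; exact htr t ht x hx2
      _ = 4 * ε * Λ / r := by rw [hm]; ring
  have e5 : ν₀ / 2 * (-(2 * k / r) + 2 * m) = - (ν₀ * k / r) + 2 * ε * ν₀ / r := by
    rw [hm]; ring
  have e6 : Bb * (‖p‖ + k + 2 * m * r) = Bb * (‖p‖ + k + 4 * ε) := by
    linear_combination 2 * Bb * hmr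
  rw [e1, e2, e5] at hms
  rw [e6] at b1
  have := (abs_le.mp b1).2
  have := (abs_le.mp b2).1
  have := (abs_le.mp c1).2
  have := (abs_le.mp c2).1
  linarith

lemma holder_bdd {d : ℕ} {α : ℝ} (hα : 0 < α) {I : Set ℝ} {g : ℝ → Euc d → ℝ}
    (h : LocHolderParab d α I g) (K : Set (ℝ × Euc d)) (hK : IsCompact K)
    (hKI : K ⊆ I ×ˢ (univ : Set (Euc d))) : ∃ C, 0 ≤ C ∧ ∀ q ∈ K, |g q.1 q.2| ≤ C := by
  obtain ⟨C, hC, hh⟩ := h K hK hKI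
  rcases K.eq_empty_or_nonempty with rfl | ⟨q₀, hq₀⟩
  · exact ⟨0, le_rfl, by simp⟩
  have hc : Continuous fun q : ℝ × Euc d => pdist d q q₀ := by
    unfold pdist; fun_prop
  obtain ⟨D, hD⟩ := hK.bddAbove_image hc.continuousOn
  refine ⟨|g q₀.1 q₀.2| + C * (max D 0) ^ α, by positivity, fun q hq => ?_⟩
  have h1 := hh q hq q₀ hq₀
  have h2 : pdist d q q₀ ≤ max D 0 := (hD (mem_image_of_mem _ hq)).trans (le_max_left _ _)
  have h0 : 0 ≤ pdist d q q₀ := by unfold pdist; positivity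
  have h3 : pdist d q q₀ ^ α ≤ (max D 0) ^ α := Real.rpow_le_rpow h0 h2 hα.le
  have h4 := mul_le_mul_of_nonneg_left h3 hC.le
  have h5 := abs_sub_abs_le_abs_sub (g q.1 q.2) (g q₀.1 q₀.2)
  linarith

lemma euc_coord_le {d : ℕ} (ξ : Euc d) (i : Fin d) : |ξ i| ≤ ‖ξ‖ := by
  simpa using PiLp.norm_apply_le ξ i

lemma qf_abs_le {d : ℕ} (A B : Fin d → Fin d → ℝ) (ξ : Euc d) :
    |qf A ξ - qf B ξ| ≤ (∑ i, ∑ j, |A i j - B i j|) * ‖ξ‖ ^ 2 := by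
  have e : qf A ξ - qf B ξ = ∑ i, ∑ j, (A i j - B i j) * ξ i * ξ j := by
    simp only [qf, ← Finset.sum_sub_distrib]
    exact Finset.sum_congr rfl fun i _ => Finset.sum_congr rfl fun j _ => by ring
  rw [e, Finset.sum_mul]
  refine (Finset.abs_sum_le_sum_abs _ _).trans (Finset.sum_le_sum fun i _ => ?_)
  rw [Finset.sum_mul]
  refine (Finset.abs_sum_le_sum_abs _ _).trans (Finset.sum_le_sum fun j _ => ?_)
  rw [abs_mul, abs_mul, mul_assoc, sq]
  have := euc_coord_le ξ i
  have := euc_coord_le ξ j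
  gcongr

lemma minEig_le {d : ℕ} (A : Fin d → Fin d → ℝ) (ξ : Euc d) (hξ : ‖ξ‖ = 1) :
    minEig d A ≤ qf A ξ := by
  refine csInf_le ⟨-(∑ i, ∑ j, |A i j|), ?_⟩ ⟨ξ, hξ, rfl⟩
  rintro _ ⟨η, hη, rfl⟩
  have := qf_abs_le A (fun _ _ => 0) η
  rw [hη] at this
  have h2 : qf (fun _ _ => (0:ℝ)) η = 0 := by simp [qf]
  rw [h2] at this
  simp only [sub_zero, one_pow, mul_one] at this
  exact (abs_le.mp this).1

lemma qf_ge {d : ℕ} (A : Fin d → Fin d → ℝ) (ν : ℝ) (h : ν ≤ minEig d A) (ξ : Euc d) :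
    ν * ‖ξ‖ ^ 2 ≤ qf A ξ := by
  rcases eq_or_ne ξ 0 with rfl | hξ
  · simp [qf]
  have hn : 0 < ‖ξ‖ := norm_pos_iff.mpr hξ
  have h1 := h.trans (minEig_le A (‖ξ‖⁻¹ • ξ)
    (by rw [norm_smul, norm_inv, norm_norm, inv_mul_cancel₀ hn.ne']))
  have h2 : qf A (‖ξ‖⁻¹ • ξ) = qf A ξ / ‖ξ‖ ^ 2 := by
    simp only [qf, Finset.sum_div]
    refine Finset.sum_congr rfl fun i _ => Finset.sum_congr rfl fun j _ => ?_
    simp only [PiLp.smul_apply, smul_eq_mul]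
    field_simp
  rw [h2, le_div_iff₀ (by positivity)] at h1
  exact h1

lemma grad_le {d : ℕ} (g : Euc d → ℝ) (z : Euc d) (hg : DifferentiableAt ℝ g z)
    (p : Euc d →L[ℝ] ℝ) (k r : ℝ) (hk : 0 ≤ k) (hr : 0 < r)
    (h : ∀ y : Euc d, ‖z - y‖ ≤ r → g z - g y - p (z - y) ≤ k * ‖z - y‖) :
    ‖fderiv ℝ g z - p‖ ≤ k := by
  have key : ∀ ξ : Euc d, (fderiv ℝ g z - p) ξ ≤ k * ‖ξ‖ := by
    intro ξ
    have hl : HasDerivAt (fun τ : ℝ => z + τ • ξ) ξ 0 := by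
      simpa using ((hasDerivAt_id (0:ℝ)).smul_const ξ).const_add z
    have hf : HasFDerivAt (fun y => g y - p y) (fderiv ℝ g z - p) (z + (0:ℝ) • ξ) := by
      rw [zero_smul, add_zero]; exact hg.hasFDerivAt.sub p.hasFDerivAt
    have hd : HasDerivAt (fun τ : ℝ => g (z + τ • ξ) - p (z + τ • ξ)) ((fderiv ℝ g z - p) ξ) 0 := by
      have := hf.comp_hasDerivAt (0:ℝ) hl
      exact this
    have hw := hd.hasDerivWithinAt (s := Iio 0)
    rw [hasDerivWithinAt_iff_tendsto_slope' (by simp)] at hw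
    refine le_of_tendsto hw ?_
    have hc : Continuous fun τ : ℝ => ‖z - (z + τ • ξ)‖ := by fun_prop
    have he : ∀ᶠ τ in nhdsWithin (0:ℝ) (Iio 0), ‖z - (z + τ • ξ)‖ < r :=
      ((hc.tendsto 0).eventually (gt_mem_nhds (by simpa using hr))).filter_mono nhdsWithin_le_nhds
    filter_upwards [he, self_mem_nhdsWithin] with τ h1 h2
    have h2' : τ < 0 := h2
    have h3 := h _ h1.le
    have h4 : ‖z - (z + τ • ξ)‖ = -τ * ‖ξ‖ := by
      rw [sub_add_cancel_left, norm_neg, norm_smul, Real.norm_eq_abs, abs_of_neg h2']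
    rw [h4, map_sub] at h3
    rw [slope_def_field, div_le_iff_of_neg (by linarith)]
    simp only [zero_smul, add_zero]
    linarith
  refine ContinuousLinearMap.opNorm_le_bound _ hk fun ξ => ?_
  rw [Real.norm_eq_abs, abs_le]
  have := key (-ξ)
  rw [map_neg, norm_neg] at this
  exact ⟨by linarith, key ξ⟩
/-- continuity of the spatial gradient up to the initial time for
`C¹_b` initial data. -/
theorem gradient_continuity_up_to_initial_time
    (d : ℕ) (hd : 1 ≤ d) (I : Set ℝ)
    (hI : ∀ ⦃t t' : ℝ⦄, t ∈ I → t ≤ t' → t' ∈ I)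
    (Q : ℝ → Euc d → Fin d → Fin d → ℝ) (b : ℝ → Euc d → Fin d → ℝ) (c : ℝ → Euc d → ℝ)
    (α : ℝ) (hα : α ∈ Ioo (0:ℝ) 1)
    (hQhold : ∀ i j, LocHolderParab d α I (fun t x => Q t x i j))
    (hbhold : ∀ j, LocHolderParab d α I (fun t x => b t x j))
    (hchold : LocHolderParab d α I c)
    (hsymm : ∀ t ∈ I, ∀ x : Euc d, ∀ i j, Q t x i j = Q t x j i)
    (ν₀ : ℝ) (hν₀ : 0 < ν₀) (hell : ∀ t ∈ I, ∀ x : Euc d, ν₀ ≤ minEig d (Q t x))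
    (c₀ : ℝ) (hc₀ : ∀ t ∈ I, ∀ x : Euc d, c t x ≤ c₀)
    -- Lyapunov condition
    (hLyap : ∃ φ : Euc d → ℝ, ContDiff ℝ 2 φ ∧ (∀ x, 0 < φ x) ∧
      (∀ M : ℝ, ∃ R : ℝ, ∀ x : Euc d, R ≤ ‖x‖ → M ≤ φ x) ∧
      (∀ a b' : ℝ, Icc a b' ⊆ I → ∃ lam > 0, ∀ t ∈ Icc a b', ∀ x : Euc d,
        Aop d Q b c t φ x ≤ lam * φ x))
    -- first-order Bernstein hypotheses with locally bounded coefficients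
    (hQdiff : ∀ t ∈ I, ∀ (x : Euc d) (i j : Fin d),
      DifferentiableAt ℝ (fun y => Q t y i j) x)
    (hbdiff : ∀ t ∈ I, ∀ (x : Euc d) (j : Fin d),
      DifferentiableAt ℝ (fun y => b t y j) x)
    (hcdiff : ∀ t ∈ I, ∀ x : Euc d, DifferentiableAt ℝ (fun y => c t y) x)
    (hgradHold : ∃ α' ∈ Ioo (0:ℝ) 1,
      (∀ i j k, LocHolderParab d α' I
        (fun t x => fderiv ℝ (fun y => Q t y i j) x (EuclideanSpace.single k 1))) ∧
      (∀ j k, LocHolderParab d α' I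
        (fun t x => fderiv ℝ (fun y => b t y j) x (EuclideanSpace.single k 1))) ∧
      (∀ k, LocHolderParab d α' I
        (fun t x => fderiv ℝ (fun y => c t y) x (EuclideanSpace.single k 1))))
    (C₁ C₂ : ℝ → ℝ) (hC₁ : LocBddOn I C₁) (hC₂ : LocBddOn I C₂)
    (hgrowthQ : ∀ t ∈ I, ∀ x : Euc d,
      Real.sqrt (∑ i, (∑ j, Q t x i j * x j) ^ 2) + (∑ i, Q t x i i) ≤
        C₁ t * (1 + ‖x‖ ^ 2) * minEig d (Q t x))
    (hgrowthb : ∀ t ∈ I, ∀ x : Euc d,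
      (∑ i, b t x i * x i) ≤ C₂ t * (1 + ‖x‖ ^ 2) * minEig d (Q t x))
    (r₀ : ℝ → Euc d → ℝ)
    (hJac : ∀ t ∈ I, ∀ (x : Euc d) (ξ : Euc d),
      (∑ i, ∑ j, fderiv ℝ (fun y => b t y i) x (EuclideanSpace.single j 1) * ξ i * ξ j) ≤
        r₀ t x * ‖ξ‖ ^ 2)
    (C : ℝ → ℝ) (hCloc : LocBddOn I C)
    (hQgrad : ∀ t ∈ I, ∀ (x : Euc d) (i j : Fin d),
      ‖fderiv ℝ (fun y => Q t y i j) x‖ ≤ C t * minEig d (Q t x))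
    (ϱ : ℝ → Euc d → ℝ)
    (hϱpos : ∀ a b' : ℝ, Icc a b' ⊆ I → ∃ ε > 0, ∀ t ∈ Icc a b', ∀ x : Euc d, ε ≤ ϱ t x)
    (hcbd : ∀ t ∈ I, ∀ x : Euc d, |c t x| ≤ ϱ t x)
    (hcgrad : ∀ t ∈ I, ∀ x : Euc d, ‖fderiv ℝ (fun y => c t y) x‖ ≤ ϱ t x)
    (L M : ℝ → ℝ) (hLloc : LocBddOn I L) (hMloc : LocBddOn I M)
    (hLpos : ∀ t ∈ I, 0 < L t) (hMpos : ∀ t ∈ I, 0 < M t)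
    (hdiss : ∀ t ∈ I, ∀ x : Euc d,
      r₀ t x + L t * ϱ t x ^ 2 ≤ M t * minEig d (Q t x))
    -- data and solution
    (s : ℝ) (hs : s ∈ I)
    (f : Euc d → ℝ) (hf : ContDiff ℝ 1 f)
    (hfb : ∃ Mf, ∀ x, |f x| ≤ Mf) (hfg : ∃ Mf, ∀ x, ‖fderiv ℝ f x‖ ≤ Mf)
    (u : ℝ → Euc d → ℝ)
    (hu : IsClassicalSolution d Q b c s f u) (hub : BoundedOnStrips d s u) :
    ContinuousOn (fun q : ℝ × Euc d => fderiv ℝ (u q.1) q.2) (Ici s ×ˢ univ) ∧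
    ∀ x₀ : Euc d,
      Tendsto (fun q : ℝ × Euc d => fderiv ℝ (u q.1) q.2)
        (nhdsWithin (s, x₀) (Ioi s ×ˢ univ)) (nhds (fderiv ℝ f x₀)) := by
  have main : ∀ x₀ : Euc d,
      Tendsto (fun q : ℝ × Euc d => fderiv ℝ (u q.1) q.2)
        (nhdsWithin (s, x₀) (Ioi s ×ˢ univ)) (nhds (fderiv ℝ f x₀)) := by
    intro x₀
    set p := fderiv ℝ f x₀ with hp
    have hIcc : Icc s (s + 1) ⊆ I := fun t ht => hI hs ht.1
    set K : Set (ℝ × Euc d) := Icc s (s + 1) ×ˢ Metric.closedBall x₀ 1 with hK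
    have hKc : IsCompact K := isCompact_Icc.prod (isCompact_closedBall _ _)
    have hKI : K ⊆ I ×ˢ (univ : Set (Euc d)) := fun q hq => ⟨hIcc hq.1, mem_univ _⟩
    have memK : ∀ t ∈ Icc s (s + 1), ∀ x : Euc d, ‖x - x₀‖ ≤ 1 → (t, x) ∈ K := by
      intro t ht x hx
      exact ⟨ht, by rw [mem_closedBall_iff_norm]; exact hx⟩
    choose qb hqb0 hqb using fun i j => holder_bdd hα.1 (hQhold i j) K hKc hKI
    choose bb hbb0 hbb using fun j => holder_bdd hα.1 (hbhold j) K hKc hKI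
    obtain ⟨cb, hcb0, hcb⟩ := holder_bdd hα.1 hchold K hKc hKI
    obtain ⟨U, hU⟩ := hub (s + 1) (by linarith)
    obtain ⟨MC, hMC⟩ := hCloc s (s + 1) hIcc
    have hMC0 : 0 ≤ MC := (abs_nonneg _).trans (hMC s ⟨le_rfl, by linarith⟩)
    have hU0 : 0 ≤ U := (abs_nonneg _).trans (hU s ⟨le_rfl, by linarith⟩ x₀)
    set Λ := ∑ i, qb i i with hΛ
    set Bb := ∑ j, bb j with hBb
    set CU := cb * U with hCU
    set L₁ := ∑ i, ∑ j : Fin d, MC * qb i i with hL₁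
    have hΛ0 : 0 ≤ Λ := Finset.sum_nonneg fun i _ => hqb0 i i
    have hBb0 : 0 ≤ Bb := Finset.sum_nonneg fun i _ => hbb0 i
    have hL₁0 : 0 ≤ L₁ := Finset.sum_nonneg fun i _ => Finset.sum_nonneg fun j _ =>
      mul_nonneg hMC0 (hqb0 i i)
    have hCU0 : 0 ≤ CU := mul_nonneg hcb0 hU0
    have hLipK : ∀ t ∈ Icc s (s + 1), ∀ x y : Euc d, ‖x - x₀‖ ≤ 1 → ‖y - x₀‖ ≤ 1 → ∀ ξ : Euc d,
        |qf (Q t y) ξ - qf (Q t x) ξ| ≤ L₁ * ‖x - y‖ * ‖ξ‖ ^ 2 := by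
      intro t ht x y hx hy ξ
      refine (qf_abs_le _ _ _).trans (mul_le_mul_of_nonneg_right ?_ (sq_nonneg _))
      rw [hL₁, Finset.sum_mul]
      refine Finset.sum_le_sum fun i _ => ?_
      rw [Finset.sum_mul]
      refine Finset.sum_le_sum fun j _ => ?_
      rw [norm_sub_rev x y]
      have hb' : ∀ w ∈ Metric.closedBall x₀ 1, ‖fderiv ℝ (fun y => Q t y i j) w‖ ≤ MC * qb i i := by
        intro w hw
        refine (hQgrad t (hIcc ht) w i j).trans ?_
        have h1 : minEig d (Q t w) ≤ qb i i := by
          refine (minEig_le (Q t w) (EuclideanSpace.single i 1) (by simp)).trans ?_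
          rw [qf_single]
          exact (le_abs_self _).trans (hqb i i (t, w) ⟨ht, hw⟩)
        have h2 : 0 ≤ minEig d (Q t w) := hν₀.le.trans (hell t (hIcc ht) w)
        exact mul_le_mul ((le_abs_self _).trans (hMC t ht)) h1 h2 hMC0
      have := (convex_closedBall x₀ (1:ℝ)).norm_image_sub_le_of_norm_fderiv_le
        (f := fun y => Q t y i j) (𝕜 := ℝ)
        (fun w _ => hQdiff t (hIcc ht) w i j) hb'
        (by rw [mem_closedBall_iff_norm]; exact hx) (by rw [mem_closedBall_iff_norm]; exact hy)
      exact this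
    rw [Metric.tendsto_nhds]
    intro η hη
    set KK := (4 * Λ + 2 * ν₀) / ν₀ + 3 with hKK
    have hKK3 : 3 ≤ KK := by
      have : 0 ≤ (4 * Λ + 2 * ν₀) / ν₀ := by positivity
      linarith
    set ε := η / (2 * KK) with hεd
    have hε : 0 < ε := by positivity
    set k := KK * ε with hkd
    have hkη : k = η / 2 := by rw [hkd, hεd]; field_simp
    have hk3 : 3 * ε ≤ k := by rw [hkd]; gcongr
    have hνk : ν₀ * k = 4 * ε * Λ + 5 * ε * ν₀ := by
      rw [hkd, hKK]; field_simp; ring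
    set W := 3 * L₁ * d * k + 4 * ε * L₁ * d + Bb * (2 * ‖p‖ + 2 * k + 4 * ε) + 2 * CU with hW
    have hstrict : HasStrictFDerivAt f p x₀ :=
      hf.contDiffAt.hasStrictFDerivAt (by norm_num)
    have hlo := hstrict.isLittleO.def hε
    rw [Metric.eventually_nhds_iff] at hlo
    obtain ⟨δ, hδ, hδf⟩ := hlo
    obtain ⟨r, hr0, hr1, hr2, hr3, hr4⟩ : ∃ r : ℝ, 0 < r ∧ 3 * r < 1 ∧ 3 * r < δ ∧
        L₁ * r < ν₀ / 2 ∧ W * r < 3 * ν₀ * ε := by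
      have ev : ∀ a c' : ℝ, 0 < c' → ∀ᶠ r in nhdsWithin (0:ℝ) (Ioi 0), a * r < c' := by
        intro a c' hc'
        have hcc : Continuous fun r : ℝ => a * r := by fun_prop
        exact ((hcc.tendsto 0).eventually (gt_mem_nhds (by simpa using hc'))).filter_mono
          nhdsWithin_le_nhds
      have h0 : ∀ᶠ r in nhdsWithin (0:ℝ) (Ioi 0), 0 < r := self_mem_nhdsWithin
      exact (h0.and ((ev 3 1 one_pos).and ((ev 3 δ hδ).and ((ev L₁ (ν₀ / 2) (by positivity)).and
        (ev W (3 * ν₀ * ε) (by positivity)))))).exists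
    have hfin : ∀ x y : Euc d, ‖x - x₀‖ ≤ 3 * r → ‖y - x₀‖ ≤ 3 * r →
        f x - f y - p (x - y) ≤ ε * ‖x - y‖ := by
      intro x y hx hy
      have := @hδf (x, y) (by
        rw [Prod.dist_eq, max_lt_iff, dist_eq_norm, dist_eq_norm]
        exact ⟨hx.trans_lt hr2, hy.trans_lt hr2⟩)
      exact (le_abs_self _).trans this
    have huc : UniformContinuousOn (fun q : ℝ × Euc d => u q.1 q.2) K :=
      hKc.uniformContinuousOn_of_continuous
        (hu.cont.mono fun q hq => ⟨hq.1.1, mem_univ _⟩)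
    rw [Metric.uniformContinuousOn_iff] at huc
    obtain ⟨δ', hδ', huc⟩ := huc (ε * r / 2) (by positivity)
    set T := s + min 1 (δ' / 2) with hT
    have hTs : s < T := by
      have : 0 < min 1 (δ' / 2) := lt_min one_pos (by positivity)
      linarith
    have hT1 : T ≤ s + 1 := by
      have := min_le_left 1 (δ' / 2); linarith
    have hTI : ∀ t ∈ Icc s T, t ∈ Icc s (s + 1) := fun t ht => ⟨ht.1, ht.2.trans hT1⟩
    have htime : ∀ t ∈ Icc s T, ∀ x : Euc d, ‖x - x₀‖ ≤ 1 → |u t x - f x| ≤ ε * r / 2 := by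
      intro t ht x hx
      have := huc (t, x) (memK t (hTI t ht) x hx) (s, x)
        (memK s ⟨le_rfl, by linarith⟩ x hx) (by
          rw [Prod.dist_eq, max_lt_iff]
          refine ⟨?_, by simpa using hδ'⟩
          rw [Real.dist_eq, abs_of_nonneg (by simpa using ht.1)]
          have h1 := ht.2
          have h2 := min_le_right 1 (δ' / 2)
          simp only
          linarith)
      rw [Real.dist_eq] at this
      simp only [hu.init] at this
      exact this.le
    have tri : ∀ x z : Euc d, ∀ a : ℝ, ‖z - x₀‖ ≤ r → ‖x - z‖ ≤ a → ‖x - x₀‖ ≤ a + r := by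
      intro x z a h1 h2
      have := norm_sub_le_norm_sub_add_norm_sub x z x₀
      linarith
    have hgrad : ∀ t ∈ Ioo s T, ∀ z : Euc d, ‖z - x₀‖ ≤ r → ‖fderiv ℝ (u t) z - p‖ ≤ k := by
      intro t ht z hz
      have t2 : ∀ x : Euc d, ‖x - z‖ ≤ 2 * r → ‖x - x₀‖ ≤ 3 * r := by
        intro x hx; linarith [tri x z _ hz hx]
      have t3 : ∀ x : Euc d, ‖x - z‖ ≤ 2 * r → ‖x - x₀‖ ≤ 1 := by
        intro x hx; linarith [t2 x hx]
      refine grad_le (u t) z ((hu.xdiff t ht.1).differentiable (by norm_num) z) p k r (by positivity)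
        hr0 ?_
      refine doubling Q b c s f u hu z p T r ν₀ Λ Bb CU L₁ ε k hr0 hν₀ hε hL₁0 ?_ ?_ ?_ ?_ ?_ ?_ ?_
        ?_ hr3.le hk3 ?_ t ⟨ht.1.le, ht.2.le⟩
      · exact fun t ht x i j => hsymm t (hIcc (hTI t ht)) x i j
      · exact fun t ht x ξ => qf_ge _ _ (hell t (hIcc (hTI t ht)) x) ξ
      · intro t ht x hx
        exact Finset.sum_le_sum fun i _ =>
          (le_abs_self _).trans (hqb i i (t, x) (memK t (hTI t ht) x (t3 x hx)))
      · exact fun t ht x y hx hy ξ => hLipK t (hTI t ht) x y (t3 x hx) (t3 y hy) ξ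
      · intro t ht x hx
        exact Finset.sum_le_sum fun i _ => hbb i (t, x) (memK t (hTI t ht) x (t3 x hx))
      · intro t ht x hx
        rw [abs_mul]
        exact mul_le_mul (hcb (t, x) (memK t (hTI t ht) x (t3 x hx))) (hU t (hTI t ht) x)
          (abs_nonneg _) hcb0
      · exact fun x y hx hy => hfin x y (t2 x hx) (t2 y hy)
      · intro t ht x y hx hxy
        have hx' : ‖x - z‖ ≤ 2 * r := by linarith
        have hy' : ‖y - z‖ ≤ 2 * r := by
          have := norm_sub_le_norm_sub_add_norm_sub y x z
          rw [norm_sub_rev y x] at this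
          linarith
        have h1 := (abs_le.mp (htime t ht x (t3 x hx'))).2
        have h2 := (abs_le.mp (htime t ht y (t3 y hy'))).1
        have h3 := hfin x y (t2 x hx') (t2 y hy')
        have h4 := mul_le_mul_of_nonneg_left hxy hε.le
        linarith
      · have e : 4 * ε * Λ / r - ν₀ * k / r + 2 * ε * ν₀ / r = -(3 * ν₀ * ε / r) := by
          rw [hνk]; ring
        have h1 : W < 3 * ν₀ * ε / r := by rw [lt_div_iff₀ hr0]; exact hr4
        rw [hW] at h1
        linarith
    have n1 : ∀ᶠ q : ℝ × Euc d in nhdsWithin (s, x₀) (Ioi s ×ˢ univ), q.1 < T :=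
      ((continuous_fst.tendsto (s, x₀)).eventually (gt_mem_nhds hTs)).filter_mono nhdsWithin_le_nhds
    have n2 : ∀ᶠ q : ℝ × Euc d in nhdsWithin (s, x₀) (Ioi s ×ˢ univ), ‖q.2 - x₀‖ < r := by
      have hcc : Continuous fun q : ℝ × Euc d => ‖q.2 - x₀‖ := by fun_prop
      exact ((hcc.tendsto (s, x₀)).eventually (gt_mem_nhds (by simpa using hr0))).filter_mono
        nhdsWithin_le_nhds
    filter_upwards [n1, n2, self_mem_nhdsWithin] with q h1 h2 h3
    rw [dist_eq_norm]
    have := hgrad q.1 ⟨h3.1, h1⟩ q.2 h2.le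
    linarith
  refine ⟨?_, main⟩
  rintro ⟨t, x⟩ ⟨ht, -⟩
  rcases (show s ≤ t from ht).lt_or_eq with h | h
  · have hmem : ((t, x) : ℝ × Euc d) ∈ Ioi s ×ˢ (univ : Set (Euc d)) := ⟨h, mem_univ _⟩
    exact (hu.grad_cont.continuousAt
      ((isOpen_Ioi.prod isOpen_univ).mem_nhds hmem)).continuousWithinAt
  · subst h
    have hus : u s = f := funext hu.init
    have hun : Ici s ×ˢ (univ : Set (Euc d)) = (Ioi s ×ˢ univ) ∪ ({s} ×ˢ univ) := by
      rw [← union_prod, union_singleton, Ioi_insert]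
    rw [hun]
    refine ContinuousWithinAt.union ?_ ?_
    · have := main x
      unfold ContinuousWithinAt
      simpa only [hus] using this
    · have hcf : Continuous fun q : ℝ × Euc d => fderiv ℝ f q.2 :=
        (hf.continuous_fderiv (by norm_num)).comp continuous_snd
      refine (hcf.continuousWithinAt (s := {s} ×ˢ univ) (x := (s, x))).congr ?_ ?_
      · rintro ⟨t', y⟩ ⟨h1, -⟩
        have : t' = s := h1
        subst this
        simp only [hus]
      · simp only [hus]
end
end

section
/- Assume the negative uniform gradient estimate holds for some σ_∞ < 0 and let (μ_t)_{t∈I} be a tight evolution system of measures. Then for every s ∈ I, every f ∈ C¹_b(ℝ^d), every classical solution u bounded on strips with datum f, and every R > 0, one has sup_{|x|≤R} |u(t,x) − ∫_{ℝ^d} f dμ_s| → 0 as t → +∞; that is, u(t,·) converges locally uniformly on ℝ^d to the constant ∫_{ℝ^d} f dμ_s. -/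
open Set Filter MeasureTheory

noncomputable section

/-- The negative uniform gradient estimate with rate `σinf < 0`. -/
def NegUniformGradEst (d : ℕ) (I : Set ℝ) (Q : ℝ → Euc d → Fin d → Fin d → ℝ)
    (b : ℝ → Euc d → Fin d → ℝ) (σinf : ℝ) : Prop :=
  ∀ s ∈ I, ∀ f : Euc d → ℝ, ContDiff ℝ 1 f →
    ∀ F G : ℝ, (∀ x, |f x| ≤ F) → (∀ x, ‖fderiv ℝ f x‖ ≤ G) →
    ∀ u : ℝ → Euc d → ℝ,
      IsClassicalSolution d Q b (fun _ _ => 0) s f u → BoundedOnStrips d s u →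
      ∀ t, s < t → ∀ x : Euc d,
        ‖fderiv ℝ (u t) x‖ ≤ Real.exp (σinf * (t - s)) * (F + G)

/-- A tight evolution system of measures for the evolution operator associated to `A`. -/
structure IsTightEvolutionSystem (d : ℕ) (I : Set ℝ)
    (Q : ℝ → Euc d → Fin d → Fin d → ℝ) (b : ℝ → Euc d → Fin d → ℝ)
    (μ : ℝ → Measure (Euc d)) : Prop where
  prob : ∀ t ∈ I, IsProbabilityMeasure (μ t)
  tight : ∀ ε : ℝ, 0 < ε → ∃ R > (0:ℝ), ∀ t ∈ I,
    1 - ε < ((μ t) (Metric.ball (0 : Euc d) R)).toReal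
  invariant : ∀ s ∈ I, ∀ t ∈ I, s < t →
    ∀ f : Euc d → ℝ, Continuous f → (∃ M, ∀ x, |f x| ≤ M) →
    ∀ u : ℝ → Euc d → ℝ,
      IsClassicalSolution d Q b (fun _ _ => 0) s f u → BoundedOnStrips d s u →
      ∫ x, u t x ∂(μ t) = ∫ x, f x ∂(μ s)

theorem aux_hess_eq (d : ℕ) (g : Euc d → ℝ) (hg : ContDiff ℝ 2 g) (x : Euc d) (i j : Fin d) :
    hess d g x i j = fderiv ℝ (fderiv ℝ g) x (EuclideanSpace.single i 1)
      (EuclideanSpace.single j 1) := by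
  have h1 : ContDiff ℝ 1 (fderiv ℝ g) := hg.fderiv_right (by norm_num)
  have h2 : DifferentiableAt ℝ (fderiv ℝ g) x := (h1.differentiable (by norm_num)) x
  unfold hess
  have := (h2.hasFDerivAt.clm_apply (hasFDerivAt_const (EuclideanSpace.single j (1:ℝ)) x)).fderiv
  rw [this]
  simp

theorem aux_second (d : ℕ) (g : Euc d → ℝ) (hg : ContDiff ℝ 2 g) (x : Euc d)
    (hmax : ∀ y, g y ≤ g x) (v : Euc d) : fderiv ℝ (fderiv ℝ g) x v v ≤ 0 := by
  by_contra! hpos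
  have h1 : ContDiff ℝ 1 (fderiv ℝ g) := hg.fderiv_right (by norm_num)
  have hd1 : Differentiable ℝ g := hg.differentiable (by norm_num)
  have hd2 : Differentiable ℝ (fderiv ℝ g) := h1.differentiable (by norm_num)
  have hl : ∀ t : ℝ, HasDerivAt (fun t : ℝ => x + t • v) v t := by
    intro t
    simpa using ((hasDerivAt_id t).smul_const v).const_add x
  set h : ℝ → ℝ := fun t => g (x + t • v) with hh
  have hder : ∀ t, HasDerivAt h (fderiv ℝ g (x + t • v) v) t := fun t =>
    (hd1 (x + t • v)).hasFDerivAt.comp_hasDerivAt t (hl t)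
  have hde : deriv h = fun t => fderiv ℝ g (x + t • v) v := funext fun t => (hder t).deriv
  have hder2 : HasDerivAt (deriv h) (fderiv ℝ (fderiv ℝ g) x v v) 0 := by
    rw [hde]
    have a : HasDerivAt (fun t : ℝ => fderiv ℝ g (x + t • v))
        (fderiv ℝ (fderiv ℝ g) (x + (0:ℝ) • v) v) 0 :=
      (hd2 (x + (0:ℝ) • v)).hasFDerivAt.comp_hasDerivAt (0:ℝ) (hl 0)
    have := a.clm_apply (hasDerivAt_const (0:ℝ) v)
    simpa using this
  have hmx : ∀ t, h t ≤ h 0 := by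
    intro t; simpa [hh] using hmax (x + t • v)
  have hlm : IsLocalMax h 0 := Filter.Eventually.of_forall hmx
  have hd0 : deriv h 0 = 0 := hlm.deriv_eq_zero
  have hmin : IsLocalMin h 0 := isLocalMin_of_deriv_deriv_pos (by rw [hder2.deriv]; exact hpos)
    hd0 (hder 0).continuousAt
  have hc : h =ᶠ[nhds 0] fun _ => h 0 := by
    filter_upwards [hmin] with t ht
    exact le_antisymm (hmx t) ht
  have h3 := hc.deriv.deriv_eq
  rw [hder2.deriv] at h3
  simp at h3
  linarith

theorem aux_posdef (d : ℕ) (A : Fin d → Fin d → ℝ) (hs : ∀ i j, A i j = A j i)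
    (ν₀ : ℝ) (hν₀ : 0 < ν₀) (h : ν₀ ≤ minEig d A) : (Matrix.of A).PosSemidef := by
  have hb : BddBelow {r : ℝ | ∃ ξ : Euc d, ‖ξ‖ = 1 ∧ (∑ i, ∑ j, A i j * ξ i * ξ j) = r} := by
    by_contra hb
    unfold minEig at h
    rw [Real.sInf_of_not_bddBelow hb] at h
    linarith
  have key : ∀ ξ : Euc d, 0 ≤ ∑ i, ∑ j, A i j * ξ i * ξ j := by
    intro ξ
    by_cases h0 : ξ = 0
    · simp [h0]
    have hn : 0 < ‖ξ‖ := norm_pos_iff.mpr h0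
    have h1 : ν₀ ≤ ∑ i, ∑ j, A i j * (‖ξ‖⁻¹ • ξ) i * (‖ξ‖⁻¹ • ξ) j :=
      h.trans (csInf_le hb ⟨‖ξ‖⁻¹ • ξ, by rw [norm_smul, norm_inv, norm_norm, inv_mul_cancel₀ hn.ne'], rfl⟩)
    have h2 : ∑ i, ∑ j, A i j * (‖ξ‖⁻¹ • ξ) i * (‖ξ‖⁻¹ • ξ) j
        = (‖ξ‖⁻¹)^2 * ∑ i, ∑ j, A i j * ξ i * ξ j := by
      simp only [Finset.mul_sum, PiLp.smul_apply, smul_eq_mul]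
      refine Finset.sum_congr rfl fun i _ => Finset.sum_congr rfl fun j _ => ?_
      ring
    rw [h2] at h1
    have h3 : 0 < (‖ξ‖⁻¹)^2 := by positivity
    by_contra! hneg
    have := mul_neg_of_pos_of_neg h3 hneg
    linarith
  refine Matrix.PosSemidef.of_dotProduct_mulVec_nonneg ?_ ?_
  · ext i j
    simp [hs i j]
  · intro v
    have := key (WithLp.toLp 2 v)
    simp only [dotProduct, Matrix.mulVec, Finset.mul_sum, Pi.star_apply, star_trivial, Matrix.of_apply]
    refine this.trans_eq (Finset.sum_congr rfl fun i _ => Finset.sum_congr rfl fun j _ => ?_)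
    simp
    ring

open scoped MatrixOrder in
theorem aux_trace (d : ℕ) (A : Fin d → Fin d → ℝ) (hA : (Matrix.of A).PosSemidef)
    (g : Euc d → ℝ) (hg : ContDiff ℝ 2 g) (x : Euc d)
    (hmax : ∀ y, g y ≤ g x) : ∑ i, ∑ j, A i j * hess d g x i j ≤ 0 := by
  obtain ⟨B, hB⟩ := CStarAlgebra.nonneg_iff_eq_star_mul_self.mp hA.nonneg
  have hAB : ∀ i j, A i j = ∑ k, B k i * B k j := by
    intro i j
    have := congrFun (congrFun hB i) j
    simpa [Matrix.mul_apply, Matrix.star_apply] using this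
  have e : ∑ i, ∑ j, A i j * hess d g x i j
      = ∑ k, fderiv ℝ (fderiv ℝ g) x (∑ i, B k i • EuclideanSpace.single i (1:ℝ))
          (∑ j, B k j • EuclideanSpace.single j (1:ℝ)) := by
    simp only [map_sum, map_smul, ContinuousLinearMap.sum_apply, ContinuousLinearMap.smul_apply,
      hAB, aux_hess_eq d g hg, smul_eq_mul, Finset.sum_mul, Finset.mul_sum]
    rw [Finset.sum_comm' (t' := Finset.univ) (s' := fun _ => Finset.univ) (by simp)]
    conv_rhs => rw [Finset.sum_comm]
    refine Finset.sum_congr rfl fun j _ => ?_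
    rw [Finset.sum_comm]
    refine Finset.sum_congr rfl fun k _ => Finset.sum_congr rfl fun i _ => ?_
    ring
  rw [e]
  exact Finset.sum_nonpos fun k _ => aux_second d g hg x hmax _

theorem aux_Aop_sub (d : ℕ) (Q : ℝ → Euc d → Fin d → Fin d → ℝ) (b : ℝ → Euc d → Fin d → ℝ)
    (t : ℝ) (g φ : Euc d → ℝ) (hg : ContDiff ℝ 2 g) (hφ : ContDiff ℝ 2 φ) (κ : ℝ) (x : Euc d) :
    Aop d Q b (fun _ _ => 0) t (fun y => g y - κ * φ y) x
      = Aop d Q b (fun _ _ => 0) t g x - κ * Aop d Q b (fun _ _ => 0) t φ x := by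
  have hd1 : Differentiable ℝ g := hg.differentiable (by norm_num)
  have hd2 : Differentiable ℝ φ := hφ.differentiable (by norm_num)
  have hf : fderiv ℝ (fun y => g y - κ * φ y) = fun y => fderiv ℝ g y - κ • fderiv ℝ φ y := by
    funext y
    exact ((hd1 y).hasFDerivAt.sub ((hd2 y).hasFDerivAt.const_mul κ)).fderiv
  have h1 : Differentiable ℝ (fderiv ℝ g) :=
    (hg.fderiv_right (m := 1) (by norm_num)).differentiable (by norm_num)
  have h2 : Differentiable ℝ (fderiv ℝ φ) :=
    (hφ.fderiv_right (m := 1) (by norm_num)).differentiable (by norm_num)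
  have hf2 : fderiv ℝ (fderiv ℝ (fun y => g y - κ * φ y)) x
      = fderiv ℝ (fderiv ℝ g) x - κ • fderiv ℝ (fderiv ℝ φ) x := by
    rw [hf]
    exact ((h1 x).hasFDerivAt.sub ((h2 x).hasFDerivAt.const_smul κ)).fderiv
  have hw : ContDiff ℝ 2 (fun y => g y - κ * φ y) := hg.sub (contDiff_const.mul hφ)
  unfold Aop
  simp only [aux_hess_eq d _ hw, aux_hess_eq d _ hg, aux_hess_eq d _ hφ, hf2]
  simp only [hf, ContinuousLinearMap.sub_apply, ContinuousLinearMap.smul_apply, smul_eq_mul,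
    mul_sub, Finset.sum_sub_distrib, mul_add, Finset.mul_sum]
  simp only [mul_left_comm κ]
  ring

theorem aux_max (d : ℕ) (I : Set ℝ)
    (hI : ∀ ⦃t t' : ℝ⦄, t ∈ I → t ≤ t' → t' ∈ I)
    (Q : ℝ → Euc d → Fin d → Fin d → ℝ) (b : ℝ → Euc d → Fin d → ℝ)
    (hsymm : ∀ t ∈ I, ∀ x : Euc d, ∀ i j, Q t x i j = Q t x j i)
    (ν₀ : ℝ) (hν₀ : 0 < ν₀) (hell : ∀ t ∈ I, ∀ x : Euc d, ν₀ ≤ minEig d (Q t x))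
    (φ : Euc d → ℝ) (hφ : ContDiff ℝ 2 φ) (hφ0 : ∀ x, 0 < φ x)
    (hφi : ∀ M : ℝ, ∃ R : ℝ, ∀ x : Euc d, R ≤ ‖x‖ → M ≤ φ x)
    (hφA : ∀ a b' : ℝ, Icc a b' ⊆ I → ∃ lam > 0, ∀ t ∈ Icc a b', ∀ x : Euc d,
        Aop d Q b (fun _ _ => 0) t φ x ≤ lam * φ x)
    (s : ℝ) (hs : s ∈ I) (f : Euc d → ℝ) (u : ℝ → Euc d → ℝ)
    (hu : IsClassicalSolution d Q b (fun _ _ => 0) s f u)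
    (hub : BoundedOnStrips d s u) (F : ℝ) (hF : ∀ x, |f x| ≤ F) (ς : ℝ) (hς : |ς| = 1)
    (T : ℝ) (hT : s < T) (x₀ : Euc d) :
    ς * u T x₀ ≤ F := by
  obtain ⟨lam, hlam, hA⟩ := hφA s T (fun t ht => hI hs ht.1)
  obtain ⟨M, hM⟩ := hub T hT
  have hςb : ∀ r : ℝ, ς * r ≤ |r| := fun r => by
    have := le_abs_self (ς * r); rwa [abs_mul, hς, one_mul] at this
  have main : ∀ δ : ℝ, 0 < δ → ς * u T x₀ - F - δ * Real.exp ((lam + 1) * (T - s)) * φ x₀ ≤ 0 := by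
    intro δ hδ
    by_contra! hpos
    obtain ⟨R, hR⟩ := hφi ((M - F) / δ)
    let w : ℝ × Euc d → ℝ := fun p =>
      ς * u p.1 p.2 - F - δ * Real.exp ((lam + 1) * (p.1 - s)) * φ p.2
    have hout : ∀ t ∈ Icc s T, ∀ x : Euc d, R ≤ ‖x‖ → w (t, x) ≤ 0 := by
      intro t ht x hx
      have h1 := hR x hx
      rw [div_le_iff₀ hδ] at h1
      have h2 := (hςb _).trans (hM t ht x)
      have h3 : 1 ≤ Real.exp ((lam + 1) * (t - s)) :=
        Real.one_le_exp (mul_nonneg (by linarith) (by linarith [ht.1]))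
      have h4 : φ x * δ ≤ δ * Real.exp ((lam + 1) * (t - s)) * φ x := by
        have := mul_le_mul_of_nonneg_left h3 (mul_pos (hφ0 x) hδ).le
        nlinarith
      show ς * u t x - F - δ * Real.exp ((lam + 1) * (t - s)) * φ x ≤ 0
      linarith
    have hTT : T ∈ Icc s T := ⟨hT.le, le_rfl⟩
    have hx₀ : ‖x₀‖ < R := by
      by_contra! hx
      have := hout T hTT x₀ hx
      exact absurd hpos (not_lt.mpr this)
    have hK : IsCompact (Icc s T ×ˢ Metric.closedBall (0 : Euc d) R) :=
      isCompact_Icc.prod (isCompact_closedBall _ _)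
    have hwc : ContinuousOn w (Icc s T ×ˢ Metric.closedBall (0 : Euc d) R) := by
      have h1 : ContinuousOn (fun p : ℝ × Euc d => u p.1 p.2)
          (Icc s T ×ˢ Metric.closedBall (0 : Euc d) R) :=
        hu.cont.mono (prod_mono Icc_subset_Ici_self (subset_univ _))
      have h2 : Continuous φ := hφ.continuous
      have h3 : Continuous fun p : ℝ × Euc d => δ * Real.exp ((lam + 1) * (p.1 - s)) * φ p.2 := by
        fun_prop
      exact ((continuousOn_const.mul h1).sub continuousOn_const).sub h3.continuousOn
    have hmem : (T, x₀) ∈ Icc s T ×ˢ Metric.closedBall (0 : Euc d) R :=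
      ⟨hTT, by simpa using hx₀.le⟩
    obtain ⟨⟨t₁, x₁⟩, ⟨ht₁, hx₁⟩, hmx⟩ := hK.exists_isMaxOn ⟨_, hmem⟩ hwc
    simp only at ht₁ hx₁
    have hw1 : 0 < w (t₁, x₁) := lt_of_lt_of_le hpos (hmx hmem)
    have hglob : ∀ t ∈ Icc s T, ∀ x, w (t, x) ≤ w (t₁, x₁) := by
      intro t ht x
      by_cases hx : ‖x‖ ≤ R
      · exact hmx (show (t, x) ∈ _ from ⟨ht, by simpa using hx⟩)
      · exact (hout t ht x (not_le.mp hx).le).trans hw1.le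
    have hst : s < t₁ := by
      rcases ht₁.1.lt_or_eq with h | h
      · exact h
      · exfalso
        subst h
        have h1 : w (s, x₁) = ς * f x₁ - F - δ * Real.exp ((lam + 1) * (s - s)) * φ x₁ := by
          show ς * u s x₁ - F - _ = _
          rw [hu.init]
        have h2 := (hςb _).trans (hF x₁)
        have h3 : 0 < δ * Real.exp ((lam + 1) * (s - s)) * φ x₁ :=
          mul_pos (mul_pos hδ (Real.exp_pos _)) (hφ0 _)
        linarith
    have htI : t₁ ∈ I := hI hs ht₁.1
    set κ := δ * Real.exp ((lam + 1) * (t₁ - s)) with hκ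
    have hκ0 : 0 < κ := mul_pos hδ (Real.exp_pos _)
    -- time derivative
    set D := deriv (fun τ => u τ x₁) t₁ with hD
    have hder : HasDerivAt (fun τ => w (τ, x₁)) (ς * D - κ * (lam + 1) * φ x₁) t₁ := by
      have h1 := ((hu.tdiff t₁ hst x₁).hasDerivAt.const_mul ς).sub_const F
      have h2 : HasDerivAt (fun τ : ℝ => (lam + 1) * (τ - s)) ((lam + 1) * 1) t₁ :=
        ((hasDerivAt_id t₁).sub_const s).const_mul _
      have h3 := ((h2.exp.const_mul δ).mul_const (φ x₁))
      refine (h1.sub h3).congr_deriv ?_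
      rw [hκ]; ring
    have hD0 : 0 ≤ ς * D - κ * (lam + 1) * φ x₁ := by
      have hsl := (hasDerivWithinAt_iff_tendsto_slope' self_notMem_Iio).mp
        (hder.hasDerivWithinAt (s := Iio t₁))
      refine ge_of_tendsto hsl ?_
      filter_upwards [Ioo_mem_nhdsLT hst] with τ hτ
      rw [slope_def_field]
      have h1 := hglob τ ⟨hτ.1.le, hτ.2.le.trans ht₁.2⟩ x₁
      exact div_nonneg_of_nonpos (by linarith) (by linarith [hτ.2])
    -- space
    have hς2 : ς * ς = 1 := by rw [← abs_mul_abs_self, hς]; norm_num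
    have hut := hu.xdiff t₁ hst
    have hςu : ContDiff ℝ 2 (fun y => ς * u t₁ y) := contDiff_const.mul hut
    have hg : ContDiff ℝ 2 (fun y => ς * u t₁ y - κ * φ y) := hςu.sub (contDiff_const.mul hφ)
    have hgm : ∀ y, ς * u t₁ y - κ * φ y ≤ ς * u t₁ x₁ - κ * φ x₁ := by
      intro y
      have : ς * u t₁ y - F - κ * φ y ≤ ς * u t₁ x₁ - F - κ * φ x₁ := hglob t₁ ht₁ y
      linarith
    have hAg : Aop d Q b (fun _ _ => 0) t₁ (fun y => ς * u t₁ y - κ * φ y) x₁ ≤ 0 := by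
      have h1 := aux_trace d (Q t₁ x₁)
        (aux_posdef d _ (hsymm t₁ htI x₁) ν₀ hν₀ (hell t₁ htI x₁)) _ hg x₁ hgm
      have h2 : fderiv ℝ (fun y => ς * u t₁ y - κ * φ y) x₁ = 0 :=
        IsLocalMax.fderiv_eq_zero (Filter.Eventually.of_forall hgm)
      unfold Aop
      simpa [h2] using h1
    have hAu : Aop d Q b (fun _ _ => 0) t₁ (fun y => ς * u t₁ y) x₁ = ς * D := by
      have h0 := aux_Aop_sub d Q b t₁ (fun _ => 0) (u t₁) contDiff_const hut (-ς) x₁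
      have hz : Aop d Q b (fun _ _ => 0) t₁ (fun _ => (0:ℝ)) x₁ = 0 := by
        simp [Aop, hess]
      rw [hz, ← hu.pde t₁ hst x₁] at h0
      simpa using h0
    rw [aux_Aop_sub d Q b t₁ _ φ hςu hφ κ x₁, hAu] at hAg
    have h5 := mul_le_mul_of_nonneg_left (hA t₁ ht₁ x₁) hκ0.le
    have h6 := mul_pos hκ0 (hφ0 x₁)
    nlinarith
  set C := Real.exp ((lam + 1) * (T - s)) * φ x₀ with hC
  have hC0 : 0 < C := mul_pos (Real.exp_pos _) (hφ0 _)
  refine le_of_forall_pos_le_add fun ε hε => ?_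
  have := main (ε / C) (div_pos hε hC0)
  rw [mul_assoc, ← hC, div_mul_cancel₀ _ hC0.ne'] at this
  linarith

/-- under the negative uniform gradient estimate, `u(t,·)` converges locally
uniformly, as `t → +∞`, to the constant `∫ f dμ_s`. -/
theorem locally_uniform_convergence_to_average
    (d : ℕ) (hd : 1 ≤ d) (I : Set ℝ)
    (hI : ∀ ⦃t t' : ℝ⦄, t ∈ I → t ≤ t' → t' ∈ I)
    (Q : ℝ → Euc d → Fin d → Fin d → ℝ) (b : ℝ → Euc d → Fin d → ℝ)
    (α : ℝ) (hα : α ∈ Ioo (0:ℝ) 1)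
    (hQhold : ∀ i j, LocHolderParab d α I (fun t x => Q t x i j))
    (hbhold : ∀ j, LocHolderParab d α I (fun t x => b t x j))
    (hsymm : ∀ t ∈ I, ∀ x : Euc d, ∀ i j, Q t x i j = Q t x j i)
    (ν₀ : ℝ) (hν₀ : 0 < ν₀) (hell : ∀ t ∈ I, ∀ x : Euc d, ν₀ ≤ minEig d (Q t x))
    (hLyap : ∃ φ : Euc d → ℝ, ContDiff ℝ 2 φ ∧ (∀ x, 0 < φ x) ∧
      (∀ M : ℝ, ∃ R : ℝ, ∀ x : Euc d, R ≤ ‖x‖ → M ≤ φ x) ∧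
      (∀ a b' : ℝ, Icc a b' ⊆ I → ∃ lam > 0, ∀ t ∈ Icc a b', ∀ x : Euc d,
        Aop d Q b (fun _ _ => 0) t φ x ≤ lam * φ x))
    (σinf : ℝ) (hσ : σinf < 0)
    (hgrad : NegUniformGradEst d I Q b σinf)
    (μ : ℝ → Measure (Euc d))
    (hμ : IsTightEvolutionSystem d I Q b μ)
    (s : ℝ) (hs : s ∈ I)
    (f : Euc d → ℝ) (hf : ContDiff ℝ 1 f)
    (hfb : ∃ Mf, ∀ x, |f x| ≤ Mf) (hfg : ∃ Mf, ∀ x, ‖fderiv ℝ f x‖ ≤ Mf)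
    (u : ℝ → Euc d → ℝ)
    (hu : IsClassicalSolution d Q b (fun _ _ => 0) s f u)
    (hub : BoundedOnStrips d s u) :
    ∀ R : ℝ, 0 < R →
      TendstoUniformlyOn (fun t x => u t x) (fun _ => ∫ y, f y ∂(μ s)) atTop
        (Metric.closedBall (0 : Euc d) R) := by
  intro R hR
  obtain ⟨F, hF⟩ := hfb
  obtain ⟨G, hG⟩ := hfg
  obtain ⟨φ, hφ, hφ0, hφi, hφA⟩ := hLyap
  have hub' : ∀ t, s < t → ∀ x, |u t x| ≤ F := by
    intro t ht x
    have h1 := aux_max d I hI Q b hsymm ν₀ hν₀ hell φ hφ hφ0 hφi hφA s hs f u hu hub F hF 1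
      (by simp) t ht x
    have h2 := aux_max d I hI Q b hsymm ν₀ hν₀ hell φ hφ hφ0 hφi hφA s hs f u hu hub F hF (-1)
      (by simp) t ht x
    rw [abs_le]; constructor <;> linarith
  have hF0 : 0 ≤ F := (abs_nonneg _).trans (hF 0)
  have hG0 : 0 ≤ G := (norm_nonneg _).trans (hG 0)
  have hLip : ∀ t, s < t → ∀ x y, |u t x - u t y| ≤
      Real.exp (σinf * (t - s)) * (F + G) * ‖x - y‖ := by
    intro t ht x y
    have := Convex.norm_image_sub_le_of_norm_fderiv_le (𝕜 := ℝ) (f := u t) (s := univ) (x := y) (y := x)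
      (fun z _ => (hu.xdiff t ht).differentiable (by norm_num) z)
      (fun z _ => hgrad s hs f hf F G hF hG u hu hub t ht z) convex_univ (mem_univ _) (mem_univ _)
    simpa using this
  rw [Metric.tendstoUniformlyOn_iff]
  intro ε hε
  set η := ε / (4 * (F + 1)) with hη
  have hη0 : 0 < η := by positivity
  obtain ⟨R', hR', htight⟩ := hμ.tight η hη0
  have hlim : Tendsto (fun t => Real.exp (σinf * (t - s)) * (F + G) * (R + R')) atTop (nhds 0) := by
    have h1 : Tendsto (fun t => σinf * (t - s)) atTop atBot :=
      Tendsto.const_mul_atTop_of_neg hσ (tendsto_atTop_add_const_right _ (-s) tendsto_id)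
    simpa using ((Real.tendsto_exp_atBot.comp h1).mul_const (F + G)).mul_const (R + R')
  filter_upwards [eventually_gt_atTop s, hlim.eventually_lt_const (half_pos hε)] with t ht hlt x hx
  have htI : t ∈ I := hI hs ht.le
  haveI := hμ.prob t htI
  have hinv := hμ.invariant s hs t htI ht f hf.continuous ⟨F, hF⟩ u hu hub
  have hcont : Continuous (u t) := (hu.xdiff t ht).continuous
  have hint : Integrable (u t) (μ t) :=
    Integrable.of_bound hcont.aestronglyMeasurable F (Filter.Eventually.of_forall (hub' t ht))
  have hxR : ‖x‖ ≤ R := by simpa using hx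
  set L := Real.exp (σinf * (t - s)) * (F + G) with hL
  have hL0 : 0 ≤ L := by positivity
  rw [Real.dist_eq, ← hinv]
  have hsub : ∫ y, u t y ∂(μ t) - u t x = ∫ y, (u t y - u t x) ∂(μ t) := by
    rw [integral_sub hint (integrable_const _)]; simp
  have hbm : MeasurableSet (Metric.ball (0 : Euc d) R')ᶜ := Metric.isOpen_ball.measurableSet.compl
  have hind : Integrable ((Metric.ball (0 : Euc d) R')ᶜ.indicator fun _ => 2 * F) (μ t) :=
    (integrable_const _).indicator hbm
  have hbound : |∫ y, (u t y - u t x) ∂(μ t)| ≤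
      ∫ y, (L * (R + R') + (Metric.ball (0 : Euc d) R')ᶜ.indicator (fun _ => 2 * F) y) ∂(μ t) := by
    rw [← Real.norm_eq_abs]
    refine norm_integral_le_of_norm_le ((integrable_const _).add hind)
      (Filter.Eventually.of_forall fun y => ?_)
    rw [Real.norm_eq_abs]
    by_cases hy : y ∈ Metric.ball (0 : Euc d) R'
    · have h1 := hLip t ht y x
      have h2 : ‖y - x‖ ≤ R + R' := by
        have := norm_sub_le y x
        have h3 : ‖y‖ < R' := by simpa using hy
        linarith
      have h3 := mul_le_mul_of_nonneg_left h2 hL0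
      have h4 : (Metric.ball (0 : Euc d) R')ᶜ.indicator (fun _ => 2 * F) y = 0 :=
        indicator_of_notMem (by simpa using hy) _
      rw [h4]; linarith
    · have h4 : (Metric.ball (0 : Euc d) R')ᶜ.indicator (fun _ => 2 * F) y = 2 * F :=
        indicator_of_mem hy _
      rw [h4]
      have h1 := abs_sub (u t y) (u t x)
      have h2 := hub' t ht y
      have h3 := hub' t ht x
      have h5 : 0 ≤ L * (R + R') := by positivity
      linarith
  rw [integral_add (integrable_const _) hind, integral_indicator_const _ hbm] at hbound
  simp only [integral_const, probReal_univ, smul_eq_mul, one_mul] at hbound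
  have hc : (μ t).real (Metric.ball (0 : Euc d) R')ᶜ ≤ η := by
    rw [probReal_compl_eq_one_sub Metric.isOpen_ball.measurableSet]
    have := htight t htI
    rw [measureReal_def]
    linarith
  have hfin : (μ t).real (Metric.ball (0 : Euc d) R')ᶜ * (2 * F) ≤ ε / 2 := by
    calc _ ≤ η * (2 * (F + 1)) := by gcongr; linarith
      _ = ε / 2 := by rw [hη]; field_simp; norm_num
  rw [hsub]
  linarith
end
end

section
/- For every bounded continuous f : ℝ → ℝ, every twice continuously differentiable function u : ℝ → ℝ satisfying u(x) − u''(x) − x³u'(x) = f(x) for all x ∈ ℝ is bounded on ℝ. -/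
open Set Filter

noncomputable section

lemma half_line_bound (f u v : ℝ → ℝ) (M : ℝ) (hM : ∀ x, |f x| ≤ M)
    (hu : ∀ x, HasDerivAt u (v x) x)
    (hv : ∀ x, HasDerivAt v (u x - x ^ 3 * v x - f x) x) :
    ∃ C, ∀ x, 1 ≤ x → |u x| ≤ C := by
  let H : ℝ → ℝ := fun x => (4 * u x ^ 2 + 4 * v x ^ 2 + M ^ 2) * Real.exp (2 * (x ^ 2)⁻¹)
  have hH : ∀ x, 1 ≤ x → HasDerivAt H
      ((8 * u x * v x + 8 * v x * (u x - x ^ 3 * v x - f x)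
        - 4 / x ^ 3 * (4 * u x ^ 2 + 4 * v x ^ 2 + M ^ 2)) * Real.exp (2 * (x ^ 2)⁻¹)) x := by
    intro x hx
    have hx0 : x ≠ 0 := by linarith
    have h1 := ((((hu x).pow 2).const_mul 4).add (((hv x).pow 2).const_mul 4)).add_const (M ^ 2)
    have h2 := ((((hasDerivAt_id x).pow 2).inv (by simpa using hx0)).const_mul 2).exp
    have h3 := h1.mul h2
    refine (h3.congr_deriv ?_).congr_of_eventuallyEq (Eventually.of_forall fun y => ?_)
    · simp
      field_simp
      ring
    · simp [H]
  have hanti : AntitoneOn H (Ici 1) := by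
    apply antitoneOn_of_deriv_nonpos (convex_Ici 1)
    · intro x hx
      exact (hH x hx).continuousAt.continuousWithinAt
    · intro x hx
      rw [interior_Ici] at hx
      exact (hH x (le_of_lt hx)).differentiableAt.differentiableWithinAt
    · intro x hx
      rw [interior_Ici] at hx
      have hx1 : (1:ℝ) < x := hx
      rw [(hH x hx1.le).deriv]
      apply mul_nonpos_of_nonpos_of_nonneg _ (Real.exp_pos _).le
      have ht : 0 < x ^ 3 := by positivity
      have hf : f x ^ 2 ≤ M ^ 2 := sq_le_sq.mpr ((hM x).trans (le_abs_self M))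
      have hs : 0 ≤ (x ^ 3 * v x + f x) ^ 2 := sq_nonneg _
      have e : 8 * u x * v x + 8 * v x * (u x - x ^ 3 * v x - f x)
          - 4 / x ^ 3 * (4 * u x ^ 2 + 4 * v x ^ 2 + M ^ 2)
          = -(4 * (2 * u x - x ^ 3 * v x) ^ 2 + 4 * (x ^ 3 * v x + f x) ^ 2
             + 4 * (M ^ 2 - f x ^ 2) + 16 * v x ^ 2) / x ^ 3 := by
        field_simp
        ring
      rw [e]
      apply div_nonpos_of_nonpos_of_nonneg _ ht.le
      nlinarith [sq_nonneg (2 * u x - x ^ 3 * v x), sq_nonneg (v x)]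
  refine ⟨H 1 + 1, fun x hx => ?_⟩
  have h := hanti (mem_Ici.mpr le_rfl) (mem_Ici.mpr hx) hx
  have he : 1 ≤ Real.exp (2 * (x ^ 2)⁻¹) := Real.one_le_exp (by positivity)
  have h2 : 4 * u x ^ 2 + 4 * v x ^ 2 + M ^ 2 ≤ H x :=
    le_mul_of_one_le_right (by positivity) he
  rw [abs_le]
  constructor <;> nlinarith [sq_nonneg (v x), sq_nonneg M, sq_nonneg (u x - 1), sq_nonneg (u x + 1)]

/-- every `C²` solution of `u − u'' − x³u' = f`, with `f` bounded and
continuous, is bounded on `ℝ`. -/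
theorem solutions_of_resolvent_equation_are_bounded
    (f : ℝ → ℝ) (hfc : Continuous f) (hfb : ∃ M, ∀ x, |f x| ≤ M)
    (u : ℝ → ℝ) (hu : ContDiff ℝ 2 u)
    (heq : ∀ x : ℝ, u x - deriv (deriv u) x - x ^ 3 * deriv u x = f x) :
    ∃ M, ∀ x, |u x| ≤ M := by
  obtain ⟨M, hM⟩ := hfb
  have h1 : ∀ x, HasDerivAt u (deriv u x) x := fun x =>
    (hu.differentiable (by norm_num) x).hasDerivAt
  have hd : ContDiff ℝ 1 (deriv u) := by
    have : ContDiff ℝ (1 + 1) u := by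
      convert hu using 1
      norm_num
    exact (contDiff_succ_iff_deriv.mp this).2.2
  have h2 : ∀ x, HasDerivAt (deriv u) (u x - x ^ 3 * deriv u x - f x) x := fun x =>
    ((hd.differentiable (by norm_num) x).hasDerivAt).congr_deriv (by linarith [heq x])
  obtain ⟨A, hA⟩ := half_line_bound f u (deriv u) M hM h1 h2
  obtain ⟨B, hB⟩ := half_line_bound (fun x => f (-x)) (fun x => u (-x))
    (fun x => -deriv u (-x)) M (fun x => hM _)
    (fun x => ((h1 (-x)).comp x (hasDerivAt_neg x)).congr_deriv (by ring))
    (fun x => (((h2 (-x)).comp x (hasDerivAt_neg x)).neg).congr_deriv (by ring))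
  obtain ⟨C, hC⟩ := (isCompact_Icc (a := (-1:ℝ)) (b := 1)).exists_bound_of_continuousOn
    hu.continuous.continuousOn
  refine ⟨max A (max B C), fun x => ?_⟩
  rcases le_total 1 x with h | h
  · exact (hA x h).trans (le_max_left _ _)
  rcases le_total x (-1) with h' | h'
  · have := hB (-x) (by linarith)
    simp only [neg_neg] at this
    exact this.trans ((le_max_left _ _).trans (le_max_right _ _))
  · exact (hC x ⟨h', h⟩).trans ((le_max_right _ _).trans (le_max_right _ _))
end
end

section
/- For every bounded continuous f : ℝ → ℝ, the set of bounded twice continuously differentiable functions u : ℝ → ℝ satisfying u(x) − u''(x) − x³u'(x) = f(x) for all x ∈ ℝ is infinite. -/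
open Set Filter

noncomputable section

lemma aux_cmp (F G F' G' : ℝ → ℝ) (hF : ∀ x, HasDerivAt F (F' x) x)
    (hG : ∀ x, HasDerivAt G (G' x) x) (hF0 : F 0 = 0) (hG0 : G 0 = 0)
    (h : ∀ x, 0 ≤ x → |F' x| ≤ G' x) : ∀ x, 0 ≤ x → |F x| ≤ G x := by
  intro x hx
  have h1 : MonotoneOn (fun x => G x - F x) (Ici 0) := by
    apply monotoneOn_of_deriv_nonneg (convex_Ici 0)
    · exact fun y _ => ((hG y).sub (hF y)).continuousAt.continuousWithinAt
    · exact fun y _ => ((hG y).sub (hF y)).differentiableAt.differentiableWithinAt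
    · intro y hy
      rw [interior_Ici] at hy
      have := ((hG y).sub (hF y)).deriv
      have e : deriv (fun x => G x - F x) y = G' y - F' y := this
      rw [e]
      have := (abs_le.1 (h y (le_of_lt hy))).2
      linarith
  have h2 : MonotoneOn (fun x => G x + F x) (Ici 0) := by
    apply monotoneOn_of_deriv_nonneg (convex_Ici 0)
    · exact fun y _ => ((hG y).add (hF y)).continuousAt.continuousWithinAt
    · exact fun y _ => ((hG y).add (hF y)).differentiableAt.differentiableWithinAt
    · intro y hy
      rw [interior_Ici] at hy
      have := ((hG y).add (hF y)).deriv
      have e : deriv (fun x => G x + F x) y = G' y + F' y := this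
      rw [e]
      have := (abs_le.1 (h y (le_of_lt hy))).1
      linarith
  have a1 := h1 (mem_Ici.2 le_rfl) (mem_Ici.2 hx) hx
  have a2 := h2 (mem_Ici.2 le_rfl) (mem_Ici.2 hx) hx
  simp only [hF0, hG0] at a1 a2
  rw [abs_le]
  constructor <;> linarith

lemma aux_refl (F F' : ℝ → ℝ) (hF : ∀ x, HasDerivAt F (F' x) x) (x : ℝ) :
    HasDerivAt (fun x => F (-x)) (-F' (-x)) x := by
  have := (hF (-x)).comp x (hasDerivAt_neg x)
  simpa [Function.comp_def] using this

/-- same-sign comparison -/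
lemma aux_cmp1 (F G F' G' : ℝ → ℝ) (hF : ∀ x, HasDerivAt F (F' x) x)
    (hG : ∀ x, HasDerivAt G (G' x) x) (hF0 : F 0 = 0) (hG0 : G 0 = 0)
    (h : ∀ x, |F' x| ≤ G' x) (x : ℝ) : |F x| ≤ |G x| := by
  rcases le_total 0 x with hx | hx
  · exact (aux_cmp F G F' G' hF hG hF0 hG0 (fun x _ => h x) x hx).trans (le_abs_self _)
  · have := aux_cmp (fun x => F (-x)) (fun x => -G (-x)) (fun x => -F' (-x)) (fun x => - -G' (-x))
      (aux_refl F F' hF) (fun x => (aux_refl G G' hG x).neg) (by simpa using hF0)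
      (by simpa using hG0) (fun x _ => by simpa using h (-x)) (-x) (by linarith)
    simp only [neg_neg] at this
    exact this.trans (neg_le_abs _)

lemma aux_cmp2 (F G F' G' : ℝ → ℝ) (hF : ∀ x, HasDerivAt F (F' x) x)
    (hG : ∀ x, HasDerivAt G (G' x) x) (hF0 : F 0 = 0) (hG0 : G 0 = 0)
    (h : ∀ x, 0 ≤ x → |F' x| ≤ G' x) (h' : ∀ x, x ≤ 0 → |F' x| ≤ -G' x) (x : ℝ) :
    |F x| ≤ G x := by
  rcases le_total 0 x with hx | hx
  · exact aux_cmp F G F' G' hF hG hF0 hG0 h x hx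
  · have := aux_cmp (fun x => F (-x)) (fun x => G (-x)) (fun x => -F' (-x)) (fun x => -G' (-x))
      (aux_refl F F' hF) (aux_refl G G' hG) (by simpa using hF0)
      (by simpa using hG0) (fun x hx => by simpa using h' (-x) (by linarith)) (-x) (by linarith)
    simpa only [neg_neg] using this

def EE (y : ℝ) : ℝ := Real.exp (y ^ 4 / 4)
def WW (y : ℝ) : ℝ := Real.exp (4 * Real.arctan (y ^ 2 / 2))
def kk (y : ℝ) : ℝ := 2 * y / (1 + y ^ 4 / 4)
def PP (q : ℝ → ℝ) (y : ℝ) : ℝ := ∫ s in (0:ℝ)..y, EE s * q s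
def JJ (q : ℝ → ℝ) (y : ℝ) : ℝ := Real.exp (-(y ^ 4 / 4)) * PP q y
def SS (q : ℝ → ℝ) (x : ℝ) : ℝ := ∫ y in (0:ℝ)..x, JJ q y

lemma EE_deriv (y : ℝ) : HasDerivAt EE (EE y * y ^ 3) y := by
  have h : HasDerivAt (fun y : ℝ => y ^ 4 / 4) (y ^ 3) y := by
    refine ((hasDerivAt_pow 4 y).div_const 4).congr_deriv ?_
    push_cast
    ring
  exact h.exp

lemma EE_cont : Continuous EE := by unfold EE; fun_prop
lemma WW_cont : Continuous WW := by unfold WW; fun_prop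
lemma EE_pos (y : ℝ) : 0 < EE y := Real.exp_pos _
lemma WW_pos (y : ℝ) : 0 < WW y := Real.exp_pos _

lemma WW_one (y : ℝ) : 1 ≤ WW y := by
  apply Real.one_le_exp
  have : 0 ≤ Real.arctan (y ^ 2 / 2) := Real.arctan_nonneg.2 (by positivity)
  linarith

lemma WW_le (y : ℝ) : WW y ≤ Real.exp (2 * Real.pi) := by
  apply Real.exp_le_exp.2
  have := Real.arctan_lt_pi_div_two (y ^ 2 / 2)
  linarith

lemma WW_deriv (y : ℝ) : HasDerivAt WW (2 * (WW y * kk y)) y := by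
  have h : HasDerivAt (fun y : ℝ => y ^ 2 / 2) y y := by
    refine ((hasDerivAt_pow 2 y).div_const 2).congr_deriv ?_
    push_cast
    ring
  have h2 := (h.arctan.const_mul 4).exp
  refine h2.congr_deriv ?_
  unfold WW kk
  have : (1 + y ^ 4 / 4) ≠ 0 := by positivity
  have : (1 + (y ^ 2 / 2) ^ 2) ≠ 0 := by positivity
  field_simp
  ring

lemma kk_deriv (y : ℝ) : HasDerivAt kk
    ((2 * (1 + y ^ 4 / 4) - 2 * y * y ^ 3) / (1 + y ^ 4 / 4) ^ 2) y := by
  have h : HasDerivAt (fun y : ℝ => 1 + y ^ 4 / 4) (y ^ 3) y := by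
    refine (((hasDerivAt_pow 4 y).div_const 4).const_add 1).congr_deriv ?_
    push_cast
    ring
  have h2 : HasDerivAt (fun y : ℝ => 2 * y) 2 y := by
    simpa using (hasDerivAt_id y).const_mul 2
  exact h2.div h (by positivity)

lemma kk_ineq (y : ℝ) :
    1 ≤ (2 * (1 + y ^ 4 / 4) - 2 * y * y ^ 3) / (1 + y ^ 4 / 4) ^ 2 + y ^ 3 * kk y := by
  unfold kk
  have h : 0 < (1 + y ^ 4 / 4) := by positivity
  have e : (2 * (1 + y ^ 4 / 4) - 2 * y * y ^ 3) / (1 + y ^ 4 / 4) ^ 2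
      + y ^ 3 * (2 * y / (1 + y ^ 4 / 4)) =
      (2 + y ^ 4 / 2 + y ^ 8 / 2) / (1 + y ^ 4 / 4) ^ 2 := by
    field_simp
    ring
  rw [e, le_div_iff₀ (by positivity)]
  nlinarith [sq_nonneg (y ^ 4)]

lemma PP_deriv (q : ℝ → ℝ) (hq : Continuous q) (y : ℝ) : HasDerivAt (PP q) (EE y * q y) y :=
  (EE_cont.mul hq).integral_hasStrictDerivAt 0 y |>.hasDerivAt

lemma JJ_deriv (q : ℝ → ℝ) (hq : Continuous q) (y : ℝ) :
    HasDerivAt (JJ q) (q y - y ^ 3 * JJ q y) y := by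
  have h : HasDerivAt (fun y : ℝ => -(y ^ 4 / 4)) (-y ^ 3) y := by
    refine (((hasDerivAt_pow 4 y).div_const 4).neg).congr_deriv ?_
    push_cast
    ring
  refine (h.exp.mul (PP_deriv q hq y)).congr_deriv ?_
  have : Real.exp (-(y ^ 4 / 4)) * EE y = 1 := by
    unfold EE; rw [← Real.exp_add]; simp
  unfold JJ
  linear_combination (q y) * this

lemma JJ_cont (q : ℝ → ℝ) (hq : Continuous q) : Continuous (JJ q) :=
  continuous_iff_continuousAt.2 fun y => (JJ_deriv q hq y).continuousAt

lemma SS_deriv (q : ℝ → ℝ) (hq : Continuous q) (y : ℝ) : HasDerivAt (SS q) (JJ q y) y :=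
  (JJ_cont q hq).integral_hasStrictDerivAt 0 y |>.hasDerivAt

lemma SS_cont (q : ℝ → ℝ) (hq : Continuous q) : Continuous (SS q) :=
  continuous_iff_continuousAt.2 fun y => (SS_deriv q hq y).continuousAt

lemma SS_sub (p q : ℝ → ℝ) (hp : Continuous p) (hq : Continuous q) (x : ℝ) :
    SS p x - SS q x = SS (fun s => p s - q s) x := by
  have hP : ∀ y, PP (fun s => p s - q s) y = PP p y - PP q y := by
    intro y
    unfold PP
    have h1 : IntervalIntegrable (fun s => EE s * p s) MeasureTheory.volume 0 y :=
      (EE_cont.mul hp).intervalIntegrable _ _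
    have h2 : IntervalIntegrable (fun s => EE s * q s) MeasureTheory.volume 0 y :=
      (EE_cont.mul hq).intervalIntegrable _ _
    rw [← intervalIntegral.integral_sub h1 h2]
    simp only [mul_sub]
  have hJ : ∀ y, JJ (fun s => p s - q s) y = JJ p y - JJ q y := by
    intro y; unfold JJ; rw [hP]; ring
  unfold SS
  rw [← intervalIntegral.integral_sub ((JJ_cont p hp).intervalIntegrable _ _)
    ((JJ_cont q hq).intervalIntegrable _ _)]
  simp only [hJ]

lemma JJ_bound (q : ℝ → ℝ) (hq : Continuous q) (C : ℝ) (hC : 0 ≤ C)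
    (h : ∀ x, |q x| ≤ C * WW x) (y : ℝ) : |JJ q y| ≤ C * (WW y * |kk y|) := by
  have h1 := aux_cmp1 (PP q) (fun y => C * ((WW y * kk y) * EE y)) _ _ (PP_deriv q hq)
    (fun y => ((((WW_deriv y).mul (kk_deriv y)).mul (EE_deriv y)).const_mul C))
    (by simp [PP]) (by simp [kk]) ?_ y
  · unfold JJ
    rw [abs_mul, abs_of_pos (Real.exp_pos _)]
    have e : Real.exp (-(y ^ 4 / 4)) * EE y = 1 := by
      unfold EE; rw [← Real.exp_add]; simp
    calc _ ≤ Real.exp (-(y ^ 4 / 4)) * |C * ((WW y * kk y) * EE y)| := by gcongr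
      _ = C * (WW y * |kk y|) := by
        rw [abs_mul, abs_mul, abs_mul, abs_of_nonneg hC, abs_of_pos (WW_pos y),
          abs_of_pos (EE_pos y)]
        linear_combination (C * (WW y * |kk y|)) * e
  · intro x
    rw [abs_mul, abs_of_pos (EE_pos x)]
    have hk := kk_ineq x
    have hW := WW_pos x
    have hE := EE_pos x
    set d := (2 * (1 + x ^ 4 / 4) - 2 * x * x ^ 3) / (1 + x ^ 4 / 4) ^ 2 with hd
    simp only [Pi.mul_apply]
    have e : C * ((2 * (WW x * kk x) * kk x + WW x * d) * EE x + WW x * kk x * (EE x * x ^ 3))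
      = EE x * (C * WW x) * (2 * kk x ^ 2 + (d + x ^ 3 * kk x)) := by ring
    calc EE x * |q x| ≤ EE x * (C * WW x) * 1 := by
          rw [mul_one]; exact mul_le_mul_of_nonneg_left (h x) hE.le
      _ ≤ EE x * (C * WW x) * (2 * kk x ^ 2 + (d + x ^ 3 * kk x)) := by
          apply mul_le_mul_of_nonneg_left _ (by positivity)
          nlinarith [sq_nonneg (kk x)]
      _ = _ := e.symm

lemma SS_bound (q : ℝ → ℝ) (hq : Continuous q) (C : ℝ) (hC : 0 ≤ C)
    (h : ∀ x, |q x| ≤ C * WW x) (x : ℝ) : |SS q x| ≤ C / 2 * WW x := by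
  have hJ := JJ_bound q hq C hC h
  have h1 := aux_cmp2 (SS q) (fun y => C / 2 * (WW y - 1)) _ _ (SS_deriv q hq)
    (fun y => ((WW_deriv y).sub_const 1).const_mul (C / 2)) (by simp [SS]) (by simp [WW])
    ?_ ?_ x
  · refine h1.trans ?_
    nlinarith
  · intro y hy
    have : 0 ≤ kk y := by unfold kk; positivity
    have h2 := hJ y
    rw [abs_of_nonneg this] at h2
    linarith
  · intro y hy
    have : kk y ≤ 0 := by
      unfold kk; exact div_nonpos_of_nonpos_of_nonneg (by linarith) (by positivity)
    have h2 := hJ y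
    rw [abs_of_nonpos this] at h2
    linarith

open BoundedContinuousFunction in
lemma exists_sol (f : ℝ → ℝ) (hfc : Continuous f) (hfb : ∃ M, ∀ x, |f x| ≤ M) (a : ℝ) :
    ∃ u : ℝ → ℝ, Continuous u ∧ (∃ M, ∀ x, |u x| ≤ M) ∧
      ∀ x, u x = a + SS (fun s => u s - f s) x := by
  obtain ⟨M, hM⟩ := hfb
  have hM0 : 0 ≤ M := (abs_nonneg _).trans (hM 0)
  have hc : ∀ v : ℝ →ᵇ ℝ, Continuous (fun s => WW s * v s - f s) := fun v =>
    (WW_cont.mul v.continuous).sub hfc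
  have hb : ∀ v : ℝ →ᵇ ℝ, ∀ x, ‖(a + SS (fun s => WW s * v s - f s) x) / WW x‖
      ≤ |a| + (‖v‖ + M) / 2 := by
    intro v x
    have hW := WW_pos x
    have h1 := SS_bound _ (hc v) (‖v‖ + M) (by positivity) (fun y => by
      have := v.norm_coe_le_norm y
      rw [Real.norm_eq_abs] at this
      have hWy := WW_one y
      calc |WW y * v y - f y| ≤ |WW y * v y| + |f y| := abs_sub _ _
        _ = WW y * |v y| + |f y| := by rw [abs_mul, abs_of_pos (WW_pos y)]
        _ ≤ WW y * ‖v‖ + M := by gcongr; exact hM y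
        _ ≤ _ := by nlinarith) x
    rw [Real.norm_eq_abs, abs_div, abs_of_pos hW, div_le_iff₀ hW]
    have h2 := abs_add_le a (SS (fun s => WW s * v s - f s) x)
    nlinarith [WW_one x, abs_nonneg a]
  let T : (ℝ →ᵇ ℝ) → (ℝ →ᵇ ℝ) := fun v => BoundedContinuousFunction.ofNormedAddCommGroup
    (fun x => (a + SS (fun s => WW s * v s - f s) x) / WW x)
    ((continuous_const.add (SS_cont _ (hc v))).div WW_cont (fun x => (WW_pos x).ne'))
    _ (hb v)
  have hT : ContractingWith (1/2 : NNReal) T := by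
    refine ⟨by rw [← NNReal.coe_lt_coe]; norm_num, LipschitzWith.of_dist_le_mul fun v w => ?_⟩
    rw [BoundedContinuousFunction.dist_le (by positivity)]
    intro x
    have hW := WW_pos x
    have h1 := SS_bound (fun s => (WW s * v s - f s) - (WW s * w s - f s))
      ((hc v).sub (hc w)) (dist v w) dist_nonneg (fun y => by
      have := BoundedContinuousFunction.dist_coe_le_dist (f := v) (g := w) y
      rw [Real.dist_eq] at this
      have e : WW y * v y - f y - (WW y * w y - f y) = (v y - w y) * WW y := by ring
      rw [e, abs_mul, abs_of_pos (WW_pos y)]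
      exact mul_le_mul_of_nonneg_right this (WW_pos y).le) x
    rw [← SS_sub _ _ (hc v) (hc w)] at h1
    rw [Real.dist_eq]
    have e : T v x - T w x = (SS (fun s => WW s * v s - f s) x
        - SS (fun s => WW s * w s - f s) x) / WW x := by
      change (a + SS (fun s => WW s * v s - f s) x) / WW x -
        (a + SS (fun s => WW s * w s - f s) x) / WW x = _
      ring
    rw [e, abs_div, abs_of_pos hW, div_le_iff₀ hW]
    refine h1.trans (le_of_eq ?_)
    push_cast
    ring
  let v := ContractingWith.fixedPoint T hT
  have hv : T v = v := hT.fixedPoint_isFixedPt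
  refine ⟨fun x => WW x * v x, WW_cont.mul v.continuous, ⟨Real.exp (2 * Real.pi) * ‖v‖, ?_⟩, ?_⟩
  · intro x
    rw [abs_mul, abs_of_pos (WW_pos x)]
    exact mul_le_mul (WW_le x) (v.norm_coe_le_norm x) (abs_nonneg _) (Real.exp_pos _).le
  · intro x
    have h1 : (a + SS (fun s => WW s * v s - f s) x) / WW x = v x :=
      congrArg (fun g : ℝ →ᵇ ℝ => g x) hv
    rw [div_eq_iff (WW_pos x).ne'] at h1
    change WW x * v x = _
    rw [h1, mul_comm]

/-- for every bounded continuous `f`, the resolvent equation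
`u − u'' − x³u' = f` has infinitely many bounded `C²` solutions. -/
theorem infinitely_many_bounded_solutions
    (f : ℝ → ℝ) (hfc : Continuous f) (hfb : ∃ M, ∀ x, |f x| ≤ M) :
    {u : ℝ → ℝ | ContDiff ℝ 2 u ∧ (∃ M, ∀ x, |u x| ≤ M) ∧
      (∀ x : ℝ, u x - deriv (deriv u) x - x ^ 3 * deriv u x = f x)}.Infinite := by
  choose U hU1 hU2 hU3 using exists_sol f hfc hfb
  apply Set.infinite_of_injective_forall_mem (f := U)
  · intro a b hab
    have ha := hU3 a 0
    have hb := hU3 b 0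
    rw [hab] at ha
    simp only [SS, intervalIntegral.integral_same, add_zero] at ha hb
    exact ha.symm.trans hb
  · intro a
    have hq : Continuous (fun s => U a s - f s) := (hU1 a).sub hfc
    have hd : ∀ x, HasDerivAt (U a) (JJ (fun s => U a s - f s) x) x := by
      intro x
      have := (SS_deriv _ hq x).const_add a
      exact this.congr_of_eventuallyEq (Eventually.of_forall (hU3 a))
    have hd1 : deriv (U a) = JJ (fun s => U a s - f s) := funext fun x => (hd x).deriv
    have hd2 : deriv (JJ (fun s => U a s - f s)) =
        fun x => (U a x - f x) - x ^ 3 * JJ (fun s => U a s - f s) x :=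
      funext fun x => (JJ_deriv _ hq x).deriv
    refine ⟨?_, hU2 a, ?_⟩
    · have : ContDiff ℝ (1 + 1) (U a) := by
        rw [contDiff_succ_iff_deriv]
        refine ⟨fun x => (hd x).differentiableAt, by simp, ?_⟩
        rw [hd1, contDiff_one_iff_deriv]
        refine ⟨fun x => (JJ_deriv _ hq x).differentiableAt, ?_⟩
        rw [hd2]
        exact hq.sub ((continuous_pow 3).mul (JJ_cont _ hq))
      simpa [one_add_one_eq_two] using this
    · intro x
      rw [hd1, hd2]
      ring
end
end

section
/- The function R₊ : ℝ → ℝ defined by R₊(x) = e^{−x⁴/4} ∫₀^x e^{s⁴/4} ds is Lebesgue integrable on (0,+∞) and on (−∞,0); i.e. R₊ ∈ L¹((−∞,0)) ∩ L¹((0,+∞)). -/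
open Set Filter MeasureTheory intervalIntegral

noncomputable section

lemma feller_cont : Continuous (fun s : ℝ => Real.exp (s ^ 4 / 4)) := by fun_prop

lemma feller_bound_pos (x : ℝ) (hx : 0 ≤ x) :
    Real.exp (-x ^ 4 / 4) * (∫ s in (0:ℝ)..x, Real.exp (s ^ 4 / 4)) ≤ 8 * (1 + x ^ 2)⁻¹ := by
  have hmul : Real.exp (-x ^ 4 / 4) * Real.exp (x ^ 4 / 4) = 1 := by
    rw [← Real.exp_add]; ring_nf; simp
  have hE := Real.exp_pos (-x ^ 4 / 4)
  rw [← div_eq_mul_inv, le_div_iff₀ (by positivity)]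
  rcases le_total x 1 with h1 | h1
  · have hG : (∫ s in (0:ℝ)..x, Real.exp (s ^ 4 / 4)) ≤ x * Real.exp (x ^ 4 / 4) := by
      have := integral_mono_on (μ := volume) hx (feller_cont.intervalIntegrable 0 x)
        (continuous_const.intervalIntegrable (μ := volume) 0 x)
        (g := fun _ => Real.exp (x ^ 4 / 4)) (fun s hs => by
          have := hs.1
          have := hs.2
          gcongr)
      simpa using this
    have hR : Real.exp (-x ^ 4 / 4) * (∫ s in (0:ℝ)..x, Real.exp (s ^ 4 / 4)) ≤ x := by
      calc _ ≤ Real.exp (-x ^ 4 / 4) * (x * Real.exp (x ^ 4 / 4)) := by gcongr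
        _ = x := by linear_combination x * hmul
    have : 1 + x ^ 2 ≤ 2 := by nlinarith
    calc _ ≤ x * (1 + x ^ 2) := by gcongr
      _ ≤ 8 := by nlinarith
  · have hx0 : 0 < x := by linarith
    have hc : x ^ 3 / 4 ≠ 0 := by positivity
    have hG : (∫ s in (0:ℝ)..x, Real.exp (s ^ 4 / 4)) ≤ (x ^ 3 / 4)⁻¹ * Real.exp (x ^ 4 / 4) := by
      have h := integral_mono_on (μ := volume) hx (feller_cont.intervalIntegrable 0 x)
        ((by fun_prop : Continuous fun s : ℝ => Real.exp (x ^ 3 / 4 * s)).intervalIntegrable 0 x)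
        (fun s hs => by
          have h0 := hs.1
          have h2 := hs.2
          apply Real.exp_le_exp.2
          have : s ^ 3 * s ≤ x ^ 3 * s := by gcongr
          nlinarith)
      refine h.trans ?_
      rw [intervalIntegral.integral_comp_mul_left (fun s => Real.exp s) hc, integral_exp]
      rw [smul_eq_mul]
      gcongr
      have : x ^ 3 / 4 * x = x ^ 4 / 4 := by ring
      rw [this]
      simp
    have hR : Real.exp (-x ^ 4 / 4) * (∫ s in (0:ℝ)..x, Real.exp (s ^ 4 / 4))
        ≤ (x ^ 3 / 4)⁻¹ := by
      calc _ ≤ Real.exp (-x ^ 4 / 4) * ((x ^ 3 / 4)⁻¹ * Real.exp (x ^ 4 / 4)) := by gcongr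
        _ = (x ^ 3 / 4)⁻¹ := by linear_combination (x ^ 3 / 4)⁻¹ * hmul
    calc _ ≤ (x ^ 3 / 4)⁻¹ * (1 + x ^ 2) := by gcongr
      _ ≤ 8 := by
        rw [inv_mul_le_iff₀ (by positivity)]
        have : x ^ 2 * 1 ≤ x ^ 2 * x := by gcongr
        nlinarith

lemma feller_bound (x : ℝ) :
    ‖Real.exp (-x ^ 4 / 4) * (∫ s in (0:ℝ)..x, Real.exp (s ^ 4 / 4))‖ ≤ 8 * (1 + x ^ 2)⁻¹ := by
  have key : ∀ y : ℝ, 0 ≤ y →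
      ‖Real.exp (-y ^ 4 / 4) * (∫ s in (0:ℝ)..y, Real.exp (s ^ 4 / 4))‖
        ≤ 8 * (1 + y ^ 2)⁻¹ := by
    intro y hy
    rw [Real.norm_of_nonneg]
    · exact feller_bound_pos y hy
    · exact mul_nonneg (Real.exp_pos _).le
        (intervalIntegral.integral_nonneg hy fun s _ => (Real.exp_pos _).le)
  rcases le_total 0 x with h | h
  · exact key x h
  · have h2 := key (-x) (by linarith)
    have h3 : (∫ s in (0:ℝ)..(-x), Real.exp (s ^ 4 / 4))
        = - ∫ s in (0:ℝ)..x, Real.exp (s ^ 4 / 4) := by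
      have := intervalIntegral.integral_comp_neg (a := 0) (b := x)
        (fun s : ℝ => Real.exp (s ^ 4 / 4))
      rw [intervalIntegral.integral_symm (-x) 0, neg_eq_iff_eq_neg, neg_neg]
      simpa [Even.neg_pow (by decide : Even 4)] using this.symm
    rw [h3, Even.neg_pow (by decide : Even 4), mul_neg, norm_neg, neg_sq] at h2
    exact h2

/-- the Feller function `R₊(x) = e^{−x⁴/4}∫₀^x e^{s⁴/4} ds` is Lebesgue
integrable on `(0,+∞)` and on `(−∞,0)`. -/
theorem feller_function_integrable :
    IntegrableOn (fun x : ℝ => Real.exp (-x ^ 4 / 4) * ∫ s in (0:ℝ)..x, Real.exp (s ^ 4 / 4))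
      (Ioi (0:ℝ)) volume ∧
    IntegrableOn (fun x : ℝ => Real.exp (-x ^ 4 / 4) * ∫ s in (0:ℝ)..x, Real.exp (s ^ 4 / 4))
      (Iio (0:ℝ)) volume := by
  have hcont : Continuous (fun x : ℝ =>
      Real.exp (-x ^ 4 / 4) * ∫ s in (0:ℝ)..x, Real.exp (s ^ 4 / 4)) :=
    (by fun_prop : Continuous fun x : ℝ => Real.exp (-x ^ 4 / 4)).mul
      (intervalIntegral.continuous_primitive
        (fun a b => feller_cont.intervalIntegrable a b) 0)
  have hint : Integrable (fun x : ℝ =>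
      Real.exp (-x ^ 4 / 4) * ∫ s in (0:ℝ)..x, Real.exp (s ^ 4 / 4)) volume :=
    (integrable_inv_one_add_sq.const_mul 8).mono' hcont.aestronglyMeasurable
      (Eventually.of_forall feller_bound)
  exact ⟨hint.integrableOn, hint.integrableOn⟩
end
end

section
/- Let ε > 0, λ > 0 and p ∈ [1,+∞), and let f : ℝ → ℝ be a smooth, compactly supported, nonnegative function which is not identically zero. Then there is no twice continuously differentiable function u : ℝ → ℝ satisfying λu(x) − u''(x) + x|x|^ε u'(x) = f(x) for all x ∈ ℝ and ∫_ℝ |u|^p dx < ∞. In other words, the equation λu − Au = f admits no solution in L^p(ℝ). -/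
open Set Filter MeasureTheory

noncomputable section

lemma aux_max_s16 (lam : ℝ) (hlam : 0 < lam) (b v v1 v2 : ℝ → ℝ) (α β : ℝ)
    (h1 : ∀ x ∈ Icc α β, HasDerivAt v (v1 x) x)
    (h2 : ∀ x ∈ Icc α β, HasDerivAt v1 (v2 x) x)
    (hα : v α ≤ 0) (hβ : v β ≤ 0)
    (hL : ∀ x ∈ Ioo α β, 0 ≤ v2 x - b x * v1 x - lam * v x) :
    ∀ x ∈ Icc α β, v x ≤ 0 := by
  intro x hx
  have hcont : ContinuousOn v (Icc α β) := fun y hy => (h1 y hy).continuousAt.continuousWithinAt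
  obtain ⟨m, hm, hmax⟩ := isCompact_Icc.exists_isMaxOn ⟨x, hx⟩ hcont
  by_contra hpos
  push Not at hpos
  have hvm : 0 < v m := lt_of_lt_of_le hpos (hmax hx)
  have hm' : m ∈ Ioo α β := by
    refine ⟨lt_of_le_of_ne hm.1 ?_, lt_of_le_of_ne hm.2 ?_⟩
    · rintro rfl; linarith
    · rintro rfl; linarith
  have hnh : Icc α β ∈ nhds m := Icc_mem_nhds hm'.1 hm'.2
  have hloc : IsLocalMax v m := hmax.isLocalMax hnh
  have hz : v1 m = 0 := hloc.hasDerivAt_eq_zero (h1 m hm)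
  have hp2 : 0 < v2 m := by
    have := hL m hm'
    rw [hz] at this
    nlinarith [mul_pos hlam hvm]
  have hev : deriv v =ᶠ[nhds m] v1 := by
    filter_upwards [hnh] with y hy using (h1 y hy).deriv
  have hd2 : deriv (deriv v) m = v2 m := by
    rw [hev.deriv_eq]; exact (h2 m hm).deriv
  have hmin : IsLocalMin v m := by
    apply isLocalMin_of_deriv_deriv_pos
    · rw [hd2]; exact hp2
    · rw [(h1 m hm).deriv, hz]
    · exact (h1 m hm).continuousAt
  have hconst : v =ᶠ[nhds m] fun _ => v m := by
    filter_upwards [hmin, hloc] with y a c using le_antisymm c a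
  have e1 : deriv v =ᶠ[nhds m] fun _ => 0 := by
    have := hconst.deriv
    simpa using this
  have e2 : deriv (deriv v) m = 0 := by
    rw [e1.deriv_eq]; simp
  linarith

lemma aux_small (p : ℝ) (hp : 1 ≤ p) (u : ℝ → ℝ)
    (hu : Integrable (fun x : ℝ => |u x| ^ p) volume) (η M : ℝ) (hη : 0 < η) :
    ∃ y, M ≤ y ∧ |u y| < η := by
  by_contra! hcon
  have hc : IntegrableOn (fun _ : ℝ => η ^ p) (Ici M) volume := by
    refine Integrable.mono' hu.integrableOn (by fun_prop) ?_
    filter_upwards [ae_restrict_mem measurableSet_Ici] with y hy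
    rw [Real.norm_of_nonneg (by positivity)]
    exact Real.rpow_le_rpow hη.le (hcon y hy) (by linarith)
  rw [integrableOn_const_iff] at hc
  have : η ^ p ≠ 0 := (Real.rpow_pos_of_pos hη p).ne'
  simp [this] at hc

lemma aux_half (ε lam : ℝ) (hε : 0 < ε) (hlam : 0 < lam) (R x0 : ℝ) (hR : 0 < R)
    (hRa : 2 * lam / ε ≤ R ^ ε) (u u1 u2 : ℝ → ℝ)
    (h1 : ∀ x, HasDerivAt u (u1 x) x) (h2 : ∀ x, HasDerivAt u1 (u2 x) x)
    (heq : ∀ x, R ≤ x → u2 x - x * |x| ^ ε * u1 x - lam * u x = 0)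
    (hs : ∀ η M : ℝ, 0 < η → ∃ y, M ≤ y ∧ |u y| < η) (hx0 : R ≤ x0) : u x0 ≤ 0 := by
  by_contra! hpos
  set a := 2 * lam / ε with ha
  have ha0 : 0 < a := by positivity
  have haε : a * ε = 2 * lam := by rw [ha]; field_simp
  have hx00 : 0 < x0 := by linarith
  have hsm : ∀ x, R ≤ x → a * x ^ (-ε) ≤ 1 := by
    intro x hx
    have hx0 : 0 < x := by linarith
    rw [Real.rpow_neg hx0.le, ← div_eq_mul_inv, div_le_one (Real.rpow_pos_of_pos hx0 _)]
    exact hRa.trans (Real.rpow_le_rpow hR.le hx hε.le)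
  set c := u x0 / 2 with hc
  have hc0 : 0 < c := by positivity
  have key : ∀ x, x0 ≤ x → ∀ δ, 0 < δ → c ≤ u x + δ * x := by
    intro x hx δ hδ
    obtain ⟨y, hy, hyu⟩ := hs 1 (max x ((2 * c + 1) / δ)) one_pos
    have hxy : x ≤ y := (le_max_left _ _).trans hy
    have hyδ : 2 * c + 1 ≤ δ * y := by
      have := (le_max_right _ _).trans hy
      rw [div_le_iff₀ hδ] at this
      linarith
    have := aux_max_s16 lam hlam (fun x => x * |x| ^ ε)
      (fun x => c * (1 + a * x ^ (-ε)) - δ * x - u x)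
      (fun x => c * (a * (-ε * x ^ (-ε - 1))) - δ - u1 x)
      (fun x => c * (a * (-ε * ((-ε - 1) * x ^ (-ε - 1 - 1)))) - u2 x) x0 y ?_ ?_ ?_ ?_ ?_ x ⟨hx, hxy⟩
    · have hxp : 0 ≤ c * (a * x ^ (-ε)) := by
        have := Real.rpow_nonneg (hx00.le.trans hx) (-ε)
        positivity
      linarith
    · intro z hz
      have hz0 : z ≠ 0 := by linarith [hz.1]
      have := Real.hasDerivAt_rpow_const (x := z) (p := -ε) (Or.inl hz0)
      have := ((((this.const_mul a).const_add 1).const_mul c).sub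
        ((hasDerivAt_id z).const_mul δ)).sub (h1 z)
      exact HasDerivAt.congr_deriv this (by simp)
    · intro z hz
      have hz0 : z ≠ 0 := by linarith [hz.1]
      have := Real.hasDerivAt_rpow_const (x := z) (p := -ε - 1) (Or.inl hz0)
      have := ((((this.const_mul (-ε)).const_mul a).const_mul c).sub_const δ).sub (h2 z)
      exact HasDerivAt.congr_deriv this (by simp)
    · have := hsm x0 hx0
      have h3 : c * (a * x0 ^ (-ε)) ≤ c * 1 := by gcongr
      have : 0 < δ * x0 := by positivity
      linarith
    · have := hsm y (by linarith)
      have h3 : c * (a * y ^ (-ε)) ≤ c * 1 := by gcongr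
      have := (abs_lt.1 hyu).1
      linarith
    · intro z hz
      have hz0 : 0 < z := by linarith [hz.1]
      have hzR : R ≤ z := by linarith [hz.1]
      have e := heq z hzR
      have h3 : c * (a * z ^ (-ε)) ≤ c * 1 := by
        have := hsm z hzR
        gcongr
      have e1 : z * |z| ^ ε * z ^ (-ε - 1) = 1 := by
        rw [abs_of_pos hz0, Real.rpow_sub_one hz0.ne', Real.rpow_neg hz0.le]
        have := (Real.rpow_pos_of_pos hz0 ε).ne'
        field_simp
      have hb : 0 < z * |z| ^ ε := by rw [abs_of_pos hz0]; positivity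
      have hh : 0 ≤ c * (a * (ε * ((ε + 1) * z ^ (-ε - 1 - 1)))) := by positivity
      have e2 : z * |z| ^ ε * (c * (a * (-ε * z ^ (-ε - 1))) - δ - u1 z)
        = - c * (2 * lam) - z * |z| ^ ε * δ - z * |z| ^ ε * u1 z := by
        linear_combination (-c * a * ε) * e1 - c * haε
      rw [e2]
      have hl : lam * (c * (a * z ^ (-ε))) ≤ lam * (c * 1) := by gcongr
      have : 0 < z * |z| ^ ε * δ := by positivity
      have : 0 < lam * (δ * z) := by positivity
      nlinarith
  obtain ⟨y, hy, hyu⟩ := hs (c / 2) x0 (by positivity)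
  have hy0 : 0 < y := by linarith
  have := key y hy (c / (2 * y)) (by positivity)
  have e : c / (2 * y) * y = c / 2 := by field_simp
  rw [e] at this
  have := (abs_lt.1 hyu).2
  linarith

/-- for `ε, λ > 0`, `p ∈ [1,∞)` and a nonnegative, not identically vanishing
`f ∈ C_c^∞(ℝ)`, the equation `λu − u'' + x|x|^ε u' = f` has no `C²` solution with
`∫|u|^p < ∞`. -/
theorem no_Lp_solution_of_resolvent_equation
    (ε lam p : ℝ) (hε : 0 < ε) (hlam : 0 < lam) (hp : 1 ≤ p)
    (f : ℝ → ℝ) (hfsm : ContDiff ℝ (⊤ : ℕ∞) f) (hfsupp : HasCompactSupport f)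
    (hfpos : ∀ x, 0 ≤ f x) (hfne : f ≠ 0) :
    ¬ ∃ u : ℝ → ℝ, ContDiff ℝ 2 u ∧
      (∀ x : ℝ, lam * u x - deriv (deriv u) x + x * |x| ^ ε * deriv u x = f x) ∧
      Integrable (fun x : ℝ => |u x| ^ p) volume := by
  rintro ⟨u, hu, heq, hint⟩
  set b : ℝ → ℝ := fun x => x * |x| ^ ε with hb
  have hbc : Continuous b := by
    have : Continuous fun x : ℝ => |x| ^ ε := continuous_abs.rpow_const (fun _ => Or.inr hε.le)
    exact continuous_id.mul this
  have h1 : ∀ x, HasDerivAt u (deriv u x) x := fun x =>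
    (hu.differentiable (by norm_num) x).hasDerivAt
  have hu1 : ContDiff ℝ 1 (deriv u) := by
    have : ContDiff ℝ (1 + 1) u := by
      convert hu using 1; norm_num
    exact (contDiff_succ_iff_deriv.1 this).2.2
  have h2 : ∀ x, HasDerivAt (deriv u) (deriv (deriv u) x) x := fun x =>
    (hu1.differentiable (by norm_num) x).hasDerivAt
  obtain ⟨r, hr⟩ := hfsupp.isCompact.isBounded.subset_closedBall 0
  have hf0 : ∀ x, r < |x| → f x = 0 := by
    intro x hx
    by_contra h
    have := hr (subset_tsupport f h)
    simp at this
    linarith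
  obtain ⟨R, hR⟩ : ∃ R : ℝ, 0 < R ∧ r < R ∧ 2 * lam / ε ≤ R ^ ε := by
    have t := (tendsto_rpow_atTop hε).eventually_ge_atTop (2 * lam / ε)
    obtain ⟨R, h⟩ := (t.and ((eventually_gt_atTop 0).and (eventually_gt_atTop r))).exists
    exact ⟨R, h.2.1, h.2.2, h.1⟩
  obtain ⟨hR0, hRr, hRa⟩ := hR
  have hint' : Integrable (fun x : ℝ => |u (-x)| ^ p) volume := hint.comp_neg
  have hs := aux_small p hp u hint
  have hs' := aux_small p hp (fun x => u (-x)) hint'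
  have eqR : ∀ x, R ≤ x → deriv (deriv u) x - x * |x| ^ ε * deriv u x - lam * u x = 0 := by
    intro x hx
    have := heq x
    rw [hf0 x (by rw [abs_of_pos (by linarith)]; linarith)] at this
    linarith
  have eqL : ∀ x, R ≤ x → deriv (deriv u) (-x) - x * |x| ^ ε * (-deriv u (-x)) - lam * u (-x) = 0 := by
    intro x hx
    have := heq (-x)
    rw [hf0 (-x) (by rw [abs_neg, abs_of_pos (by linarith)]; linarith), abs_neg] at this
    linarith
  have k1 : ∀ x, HasDerivAt (fun x => u (-x)) (-deriv u (-x)) x := by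
    intro x
    exact HasDerivAt.congr_deriv ((h1 (-x)).scomp x (hasDerivAt_neg x)) (by simp)
  have k2 : ∀ x, HasDerivAt (fun x => -deriv u (-x)) (deriv (deriv u) (-x)) x := by
    intro x
    exact HasDerivAt.congr_deriv ((h2 (-x)).scomp x (hasDerivAt_neg x)).neg (by simp)
  have zR : ∀ x, R ≤ x → u x = 0 := by
    intro x hx
    apply le_antisymm
    · exact aux_half ε lam hε hlam R x hR0 hRa u _ _ h1 h2 eqR hs hx
    · have := aux_half ε lam hε hlam R x hR0 hRa (fun x => - u x) (fun x => - deriv u x)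
        (fun x => - deriv (deriv u) x) (fun x => (h1 x).neg) (fun x => (h2 x).neg)
        (fun x hx => by have := eqR x hx; linarith) (by simpa using hs) hx
      linarith
  have zL : ∀ x, x ≤ -R → u x = 0 := by
    have : ∀ x, R ≤ x → u (-x) = 0 := by
      intro x hx
      apply le_antisymm
      · exact aux_half ε lam hε hlam R x hR0 hRa (fun x => u (-x)) _ _ k1 k2 eqL hs' hx
      · have := aux_half ε lam hε hlam R x hR0 hRa (fun x => - u (-x)) (fun x => - -deriv u (-x))
          (fun x => - deriv (deriv u) (-x)) (fun x => (k1 x).neg) (fun x => (k2 x).neg)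
          (fun x hx => by have := eqL x hx; linarith) (by simpa using hs') hx
        linarith
    intro x hx
    simpa using this (-x) (by linarith)
  -- nonnegativity
  have hun : ∀ x ∈ Icc (-(R+1)) (R+1), 0 ≤ u x := by
    intro x hx
    have := aux_max_s16 lam hlam b (fun x => - u x) (fun x => - deriv u x)
        (fun x => - deriv (deriv u) x) (-(R+1)) (R+1) (fun x _ => (h1 x).neg) (fun x _ => (h2 x).neg)
        (by rw [zL (-(R+1)) (by linarith)]; simp) (by simp [zR (R+1) (by linarith)])
        (fun x _ => by
          have := heq x
          have := hfpos x
          simp only [hb]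
          linarith) x hx
    linarith
  have dR : deriv u (R+1) = 0 := by
    have : u =ᶠ[nhds (R+1)] fun _ => 0 := by
      filter_upwards [Ici_mem_nhds (show R < R+1 by linarith)] with y hy using zR y hy
    rw [this.deriv_eq]; simp
  have dL : deriv u (-(R+1)) = 0 := by
    have : u =ᶠ[nhds (-(R+1))] fun _ => 0 := by
      filter_upwards [Iic_mem_nhds (show -(R+1) < -R by linarith)] with y hy using zL y hy
    rw [this.deriv_eq]; simp
  obtain ⟨C, hC⟩ := (isCompact_Icc (a := -(R+1)) (b := R+1)).exists_bound_of_continuousOn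
    hbc.continuousOn
  have hC0 : 0 ≤ C := (norm_nonneg _).trans (hC 0 ⟨by linarith, by linarith⟩)
  set k := C + lam + 1 with hk
  have hB : ∀ x, HasDerivAt (fun x => ∫ t in (0:ℝ)..x, b t) (b x) x := fun x =>
    intervalIntegral.integral_hasDerivAt_right (hbc.intervalIntegrable _ _)
      hbc.stronglyMeasurable.stronglyMeasurableAtFilter hbc.continuousAt
  set B := fun x => ∫ t in (0:ℝ)..x, b t with hBdef
  set W : ℝ → ℝ := fun x => Real.exp (k * x - B x) * (deriv u x - k * u x) with hW
  have hWd : ∀ x, HasDerivAt W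
      (Real.exp (k * x - B x) * (-f x - u x * (k ^ 2 - b x * k - lam))) x := by
    intro x
    have e := ((((hasDerivAt_id x).const_mul k).sub (hB x)).exp).mul
      ((h2 x).sub ((h1 x).const_mul k))
    refine e.congr_deriv ?_
    have := heq x
    simp only [id, Pi.sub_apply, mul_one]
    rw [← this]
    simp only [hb]
    ring
  have hq : ∀ x ∈ Icc (-(R+1)) (R+1), 0 ≤ k ^ 2 - b x * k - lam := by
    intro x hx
    have := (abs_le.1 (hC x hx)).2
    have hk0 : 0 ≤ k := by positivity
    have : b x * k ≤ C * k := by gcongr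
    nlinarith
  have hanti : AntitoneOn W (Icc (-(R+1)) (R+1)) := by
    apply antitoneOn_of_deriv_nonpos (convex_Icc _ _)
    · exact fun x _ => (hWd x).continuousAt.continuousWithinAt
    · exact fun x _ => (hWd x).differentiableAt.differentiableWithinAt
    · intro x hx
      have hx := interior_subset hx
      rw [(hWd x).deriv]
      apply mul_nonpos_of_nonneg_of_nonpos (Real.exp_pos _).le
      have := mul_nonneg (hun x hx) (hq x hx)
      linarith [hfpos x]
  have WR : W (R+1) = 0 := by simp [hW, dR, zR (R+1) (by linarith)]
  have WL : W (-(R+1)) = 0 := by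
    simp only [hW]
    rw [dL, zL (-(R+1)) (by linarith)]; simp
  have hW0 : ∀ x ∈ Icc (-(R+1)) (R+1), W x = 0 := by
    intro x hx
    apply le_antisymm
    · rw [← WL]; exact hanti (left_mem_Icc.2 (by linarith)) hx hx.1
    · rw [← WR]; exact hanti hx (right_mem_Icc.2 (by linarith)) hx.2
  apply hfne
  funext x
  by_cases hx : r < |x|
  · exact hf0 x hx
  · push Not at hx
    have hx' := abs_le.1 hx
    have hI : x ∈ Icc (-(R+1)) (R+1) := ⟨by linarith, by linarith⟩
    have hev : W =ᶠ[nhds x] fun _ => 0 := by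
      filter_upwards [Icc_mem_nhds (show -(R+1) < x by linarith) (show x < R+1 by linarith)]
        with y hy using hW0 y hy
    have hd : deriv W x = 0 := by rw [hev.deriv_eq]; simp
    rw [(hWd x).deriv] at hd
    have := (mul_eq_zero.1 hd).resolve_left (Real.exp_pos _).ne'
    have := mul_nonneg (hun x hI) (hq x hI)
    have := hfpos x
    simp only [Pi.zero_apply]
    linarith
end
end

section
/- Let ε, λ, β > 0 and let W(x) = ε/(2λ) + |x|^{−ε}. Let r > 0 be such that λW(x) − W''(x) + x|x|^ε W'(x) ≤ 0 for all |x| ≥ r. If u : ℝ → ℝ is a bounded twice continuously differentiable function satisfying λu(x) − u''(x) + x|x|^ε u'(x) ≥ 0 for all |x| ≥ r, and u(r) ≥ βW(r) and u(−r) ≥ βW(−r), then u(x) ≥ βW(x) for every x with |x| ≥ r. -/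
open Set Filter

noncomputable section

lemma min_second (z z1 z2 : ℝ → ℝ) (h1 : ∀ x, 0 < x → HasDerivAt z (z1 x) x)
    (h2 : ∀ x, 0 < x → HasDerivAt z1 (z2 x) x) (x : ℝ) (hx : 0 < x) (hm : IsLocalMin z x) :
    z1 x = 0 ∧ 0 ≤ z2 x := by
  have hz1 : z1 x = 0 := hm.hasDerivAt_eq_zero (h1 x hx)
  refine ⟨hz1, ?_⟩
  by_contra! hneg
  have hd : deriv z =ᶠ[nhds x] z1 := by
    filter_upwards [lt_mem_nhds hx] with y hy using (h1 y hy).deriv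
  have hdd : deriv (deriv z) x = z2 x := by rw [hd.deriv_eq]; exact (h2 x hx).deriv
  have hmax : IsLocalMax z x :=
    isLocalMax_of_deriv_deriv_neg (by rw [hdd]; exact hneg)
      (by rw [hd.eq_of_nhds]; exact hz1) (h1 x hx).continuousAt
  have hc : z =ᶠ[nhds x] fun _ => z x := by
    filter_upwards [hm, hmax] with y a b using le_antisymm b a
  have hc1 : deriv z =ᶠ[nhds x] fun _ => (0:ℝ) := by
    have := hc.deriv
    simpa using this
  have : deriv (deriv z) x = 0 := by rw [hc1.deriv_eq]; simp
  linarith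

lemma half_line (w w1 w2 c : ℝ → ℝ) (lam r M : ℝ) (hlam : 0 < lam) (hr : 0 < r)
    (hc : ∀ x, r ≤ x → 0 ≤ c x)
    (h1 : ∀ x, 0 < x → HasDerivAt w (w1 x) x)
    (h2 : ∀ x, 0 < x → HasDerivAt w1 (w2 x) x)
    (hM : ∀ x, r ≤ x → -M ≤ w x)
    (hs : ∀ x, r ≤ x → 0 ≤ lam * w x - w2 x + c x * w1 x) (h0 : 0 ≤ w r) :
    ∀ x, r ≤ x → 0 ≤ w x := by
  intro p hp
  by_contra! hneg
  obtain ⟨K, hK⟩ : ∃ K, K = 2 / lam := ⟨_, rfl⟩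
  have hKp : 0 < K := by rw [hK]; positivity
  have hlK : lam * K = 2 := by rw [hK]; field_simp
  have hV : 0 < p ^ 2 + K := by positivity
  obtain ⟨δ, hδ⟩ : ∃ δ, δ = -w p / (2 * (p ^ 2 + K)) := ⟨_, rfl⟩
  have hδp : 0 < δ := by rw [hδ]; apply div_pos <;> linarith
  have hδe : δ * (p ^ 2 + K) = - w p / 2 := by rw [hδ]; field_simp
  obtain ⟨z, hz⟩ : ∃ z : ℝ → ℝ, z = fun x => w x + δ * (x ^ 2 + K) := ⟨_, rfl⟩
  have hz1 : ∀ x, 0 < x → HasDerivAt z (w1 x + δ * (2 * x)) x := by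
    intro x hx
    rw [hz]
    have := (h1 x hx).add ((((hasDerivAt_id x).pow 2).add_const K).const_mul δ)
    exact this.congr_deriv (by simp)
  have hz2 : ∀ x, 0 < x → HasDerivAt (fun x => w1 x + δ * (2 * x)) (w2 x + δ * 2) x := by
    intro x hx
    have := (h2 x hx).add (((hasDerivAt_id x).const_mul 2).const_mul δ)
    exact this.congr_deriv (by simp)
  have hzp : z p < 0 := by rw [hz]; simp only; rw [hδe]; linarith
  obtain ⟨R, hR⟩ : ∃ R, R = p + |M| / δ + 1 := ⟨_, rfl⟩
  have hMd : 0 ≤ |M| / δ := by positivity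
  have hRz : 0 ≤ z R := by
    have a := hM R (by linarith)
    have b : |M| ≤ δ * R := by
      have : δ * (|M| / δ) = |M| := by field_simp
      rw [hR]; nlinarith
    have b' : δ * R ≤ δ * R ^ 2 := by
      have : 1 ≤ R := by linarith
      apply mul_le_mul_of_nonneg_left _ hδp.le
      nlinarith
    have := le_abs_self M
    have : 0 < δ * K := by positivity
    rw [hz]; simp only; linarith
  have hrz : 0 ≤ z r := by rw [hz]; simp only; positivity
  obtain ⟨x, hx, hmin⟩ := isCompact_Icc.exists_isMinOn (s := Icc r R) ⟨p, hp, by linarith⟩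
    (f := z) (fun y hy => (hz1 y (by linarith [hy.1])).continuousAt.continuousWithinAt)
  have hxp : z x ≤ z p := hmin ⟨hp, by linarith⟩
  have hxr : r < x := lt_of_le_of_ne hx.1 (by rintro rfl; linarith)
  have hxR : x < R := lt_of_le_of_ne hx.2 (by rintro rfl; linarith)
  have hloc : IsLocalMin z x := hmin.isLocalMin (Icc_mem_nhds hxr hxR)
  have hx0 : 0 < x := by linarith
  obtain ⟨e1, e2⟩ := min_second z _ _ hz1 hz2 x hx0 hloc
  have s := hs x hx.1
  have e3 : w1 x = - (δ * (2 * x)) := by linarith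
  have e4 : 0 ≤ c x * (δ * (2 * x)) := mul_nonneg (hc x hx.1) (by positivity)
  have e5 : w x + δ * (x ^ 2 + K) < 0 := by
    have : z x < 0 := by linarith
    rw [hz] at this; exact this
  rw [e3] at s
  have e6 : lam * (w x + δ * (x ^ 2 + K)) < 0 := mul_neg_of_pos_of_neg hlam e5
  have e7 : lam * (w x + δ * (x ^ 2 + K)) = lam * w x + lam * δ * x ^ 2 + δ * 2 := by
    rw [← hlK]; ring
  have e8 : 0 < lam * δ * x ^ 2 := by positivity
  linarith

/-- comparison estimate on the exterior domain `{|x| ≥ r}` for the operator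
`Aψ = ψ'' − x|x|^ε ψ'` with barrier `W(x) = ε/(2λ) + |x|^{−ε}`. -/
theorem exterior_comparison_estimate
    (ε lam β : ℝ) (hε : 0 < ε) (hlam : 0 < lam) (hβ : 0 < β)
    (W : ℝ → ℝ) (hW : W = fun x : ℝ => ε / (2 * lam) + |x| ^ (-ε))
    (r : ℝ) (hr : 0 < r)
    (hWsub : ∀ x : ℝ, r ≤ |x| →
      lam * W x - deriv (deriv W) x + x * |x| ^ ε * deriv W x ≤ 0)
    (u : ℝ → ℝ) (hu : ContDiff ℝ 2 u) (hub : ∃ M, ∀ x, |u x| ≤ M)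
    (husuper : ∀ x : ℝ, r ≤ |x| →
      0 ≤ lam * u x - deriv (deriv u) x + x * |x| ^ ε * deriv u x)
    (hbdry₁ : β * W r ≤ u r) (hbdry₂ : β * W (-r) ≤ u (-r)) :
    ∀ x : ℝ, r ≤ |x| → β * W x ≤ u x := by
  obtain ⟨M, hM⟩ := hub
  have hWc : ∀ x : ℝ, x ≠ 0 → ContDiffAt ℝ 2 W x := by
    intro x hx
    rw [hW]
    exact contDiffAt_const.add ((contDiffAt_abs hx).rpow_const_of_ne (abs_ne_zero.mpr hx))
  have key : ∀ f : ℝ → ℝ, ∀ x, ContDiffAt ℝ 2 f x →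
      HasDerivAt f (deriv f x) x ∧ HasDerivAt (deriv f) (deriv (deriv f) x) x := by
    intro f x h
    refine ⟨(h.differentiableAt (by norm_num)).hasDerivAt, ?_⟩
    have : ContDiffAt ℝ 1 (deriv f) x := by
      have h' : ContDiffAt ℝ 1 (fderiv ℝ f) x := h.fderiv_right (by norm_num)
      exact h'.clm_apply contDiffAt_const
    exact (this.differentiableAt (by norm_num)).hasDerivAt
  have hWb : ∀ x : ℝ, r ≤ |x| → W x ≤ ε / (2 * lam) + r ^ (-ε) := by
    intro x hx
    rw [hW]
    have := Real.rpow_le_rpow_of_nonpos hr hx (neg_nonpos.mpr hε.le)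
    simp only; linarith
  have hw1 : ∀ x : ℝ, x ≠ 0 → HasDerivAt (fun y => u y - β * W y) (deriv u x - β * deriv W x) x :=
    fun x hx => (key u x hu.contDiffAt).1.sub ((key W x (hWc x hx)).1.const_mul β)
  have hw2 : ∀ x : ℝ, x ≠ 0 → HasDerivAt (fun y => deriv u y - β * deriv W y)
      (deriv (deriv u) x - β * deriv (deriv W) x) x :=
    fun x hx => (key u x hu.contDiffAt).2.sub ((key W x (hWc x hx)).2.const_mul β)
  have hsup : ∀ x : ℝ, r ≤ |x| → 0 ≤ lam * (u x - β * W x)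
      - (deriv (deriv u) x - β * deriv (deriv W) x)
      + x * |x| ^ ε * (deriv u x - β * deriv W x) := by
    intro x hx
    have a := husuper x hx
    have b := mul_nonpos_of_nonneg_of_nonpos hβ.le (hWsub x hx)
    linarith
  have hlow : ∀ x : ℝ, r ≤ |x| → -(M + β * (ε / (2 * lam) + r ^ (-ε))) ≤ u x - β * W x := by
    intro x hx
    have a := (abs_le.mp (hM x)).1
    have b := mul_le_mul_of_nonneg_left (hWb x hx) hβ.le
    linarith
  have hc : ∀ x : ℝ, r ≤ x → 0 ≤ x * |x| ^ ε := by
    intro x hx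
    have : 0 < x := by linarith
    positivity
  have hle : ∀ x : ℝ, r ≤ x → r ≤ |x| := fun x hx => hx.trans (le_abs_self x)
  have hle' : ∀ x : ℝ, r ≤ x → r ≤ |-x| := fun x hx => by rw [abs_neg]; exact hle x hx
  intro x hx
  rcases le_abs.mp hx with h | h
  · have := half_line _ _ _ (fun x => x * |x| ^ ε) lam r _ hlam hr hc
      (fun x hx => hw1 x hx.ne') (fun x hx => hw2 x hx.ne') (fun x hx => hlow x (hle x hx))
      (fun x hx => hsup x (hle x hx)) (by linarith) x h
    linarith
  · have := half_line (fun y => u (-y) - β * W (-y)) (fun y => -(deriv u (-y) - β * deriv W (-y)))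
      (fun y => deriv (deriv u) (-y) - β * deriv (deriv W) (-y))
      (fun x => x * |x| ^ ε) lam r _ hlam hr hc
      (fun x hx => by
        have := (hw1 (-x) (by linarith [hx] : -x < 0).ne).comp x (hasDerivAt_neg x)
        exact this.congr_deriv (by ring))
      (fun x hx => by
        have := ((hw2 (-x) (by linarith [hx] : -x < 0).ne).comp x (hasDerivAt_neg x)).neg
        exact this.congr_deriv (by ring))
      (fun x hx => hlow (-x) (hle' x hx))
      (fun x hx => by
        have := hsup (-x) (hle' x hx)
        rw [abs_neg] at this
        linarith) (by linarith) (-x) h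
    simp only [neg_neg] at this
    linarith
end
end
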